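/- Let t ≥ m ≥ 1 be integers, let q ∈ ℂ with 0 < |q| < 1, and let x ∈ ℂ with |q| < |x| < |q|^{-1}. Then q^{-t} Σ_{k_t ≥ … ≥ k_1 ≥ 0, k_m ≥ 1} (xq;q)_{k_t-1} (q/x;q)_{k_t-1} q^{k_t} Π_{i=1}^{t-1} q^{k_i^2} [ k_{i+1} - k_i - i + Σ_{j=1}^{i} (2 k_j + χ(m > j)) choose k_{i+1} - k_i ]_q = -q^{-t/2 - m/2 + 3/8} · ((xq;q)_∞ (q/x;q)_∞ / ((q;q)_∞)^2) · ( Σ_{r,s,u ≥ 0, r ≢ s (mod 2)} + Σ_{r,s,u < 0, r ≢ s (mod 2)} ) (-1)^{(r-s-1)/2} x^u q^{r^2/8 + (4t+3)rs/4 + s^2/8 + (1+m+t)r/2 + (1-m+t)s/2 + u(r+s+1)/2}, where each of the series converges absolutely. Note that for integers r ≢ s (mod 2), the quantities (r-s-1)/2 and (r+s+1)/2 are integers, and the total exponent of q in each term (including the prefactor exponent -t/2 - m/2 + 3/8) is an integer. -/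

import Mathlib

open Finset

/-- The finite q-Pochhammer symbol `(a;q)_n`. -/
noncomputable def qPoch (q a : ℂ) (n : ℕ) : ℂ := ∏ j ∈ Finset.range n, (1 - a * q ^ j)

/-- The infinite q-Pochhammer symbol `(a;q)_∞`. -/
noncomputable def qPochInf (q a : ℂ) : ℂ := ∏' j : ℕ, (1 - a * q ^ j)

/-- The Gaussian binomial coefficient `[n choose k]_q`, zero outside `0 ≤ k ≤ n`. -/
noncomputable def qBinom (q : ℂ) (n k : ℤ) : ℂ :=
  if 0 ≤ k ∧ k ≤ n then
    ∏ j ∈ Finset.range k.toNat, (1 - q ^ (n - k + (j : ℤ) + 1)) / (1 - q ^ ((j : ℤ) + 1))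
  else 0

/-- The product
`Π_{i=1}^{T-1} q^{k_i²} [k_{i+1} - k_i - i + Σ_{j=1}^{i}(2k_j + χ(M>j)) choose k_{i+1}-k_i]_q`
of the vector-valued U-function, for tuples of length `t+1`; the paper's `t, m`
are `t+1, m+1`, so `χ(M > j)` (paper `j`) becomes `χ(j < m)` for 0-based `j`. -/
noncomputable def UtProdM (q : ℂ) (t m : ℕ) (K : Fin (t+1) → ℕ) : ℂ :=
  ∏ i : Fin t, (q ^ (K i.castSucc ^ 2) *
    qBinom q ((K i.succ : ℤ) - (K i.castSucc : ℤ) - ((i : ℕ) + 1)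
        + ∑ j ∈ Finset.univ.filter (fun j : Fin (t+1) => (j : ℕ) ≤ (i : ℕ)),
            (2 * (K j : ℤ) + if (j : ℕ) < m then 1 else 0))
      ((K i.succ : ℤ) - (K i.castSucc : ℤ)))

/-- The summand of the multisum defining `U_t^{(m)}(-x;q)`. -/
noncomputable def UtTermM (q x : ℂ) (t m : ℕ) (K : Fin (t+1) → ℕ) : ℂ :=
  qPoch q (x * q) (K (Fin.last t) - 1) * qPoch q (q / x) (K (Fin.last t) - 1) *
    q ^ (K (Fin.last t)) * UtProdM q t m K

/-- The Hecke-type triple-sum summand `(-1)^{(r-s-1)/2} x^u q^{E}` where the integer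
exponent `E = r²/8 + (4T+3)rs/4 + s²/8 + (1+M+T)r/2 + (1-M+T)s/2 + u(r+s+1)/2
- T/2 - M/2 + 3/8` (the prefactor exponent `-T/2 - M/2 + 3/8` has been absorbed,
making the total exponent of `q` an integer, as noted in the statement);
`T, M` are the paper's `t, m`. -/
noncomputable def heckeTermM3 (q x : ℂ) (T M : ℤ) (p : ℤ × ℤ × ℤ) : ℂ :=
  (-1 : ℂ) ^ ((p.1 - p.2.1 - 1) / 2) * x ^ p.2.2 *
    q ^ ((p.1 ^ 2 + p.2.1 ^ 2 + 2 * (4 * T + 3) * p.1 * p.2.1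
          + 4 * (1 + M + T) * p.1 + 4 * (1 - M + T) * p.2.1 - 4 * T - 4 * M + 3
          + 4 * p.2.2 * (p.1 + p.2.1 + 1)) / 8)

/-- reciprocal of (q;q)_n, zero for negative n -/
noncomputable def iq (q : ℂ) (n : ℤ) : ℂ :=
  if 0 ≤ n then (∏ j ∈ Finset.range n.toNat, (1 - q ^ (j + 1)))⁻¹ else 0

def NR (q : ℂ) : Prop := q ≠ 0 ∧ ∀ n : ℕ, 0 < n → q ^ n ≠ 1

lemma NR.zpow {q : ℂ} (h : NR q) {n : ℤ} (hn : n ≠ 0) : 1 - q ^ n ≠ 0 := by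
  intro h0
  have h1 : q ^ n = 1 := by linear_combination -h0
  rcases lt_or_gt_of_ne hn with h2 | h2
  · apply h.2 (-n).toNat (by omega)
    rw [← zpow_natCast, Int.toNat_of_nonneg (by omega), zpow_neg, h1, inv_one]
  · apply h.2 n.toNat (by omega)
    rw [← zpow_natCast, Int.toNat_of_nonneg (by omega), h1]

lemma iq_neg (q : ℂ) {n : ℤ} (h : n < 0) : iq q n = 0 := by
  simp [iq, not_le.mpr h]

lemma iq_zero (q : ℂ) : iq q 0 = 1 := by simp [iq]

lemma iq_nat (q : ℂ) (n : ℕ) :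
    iq q n = (∏ j ∈ Finset.range n, (1 - q ^ (j + 1)))⁻¹ := by
  simp [iq]

lemma iq_rel {q : ℂ} (h : NR q) (n : ℤ) : iq q (n - 1) = (1 - q ^ n) * iq q n := by
  rcases lt_trichotomy n 0 with h1 | h1 | h1
  · rw [iq_neg q h1, iq_neg q (by omega)]; simp
  · subst h1; rw [iq_neg q (by omega)]; simp
  · obtain ⟨k, rfl⟩ : ∃ k : ℕ, n = k + 1 := ⟨(n - 1).toNat, by omega⟩
    have e : ((k : ℤ) + 1 - 1) = (k : ℕ) := by simp
    have e2 : ((k : ℤ) + 1) = ((k + 1 : ℕ) : ℤ) := by simp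
    rw [e, e2, iq_nat, iq_nat, Finset.prod_range_succ, mul_inv, zpow_natCast]
    have : 1 - q ^ (k + 1) ≠ 0 := by
      have := h.zpow (n := ((k + 1 : ℕ) : ℤ)) (by omega)
      rwa [zpow_natCast] at this
    field_simp

/-- Toeplitz symbol -/
noncomputable def Rq (q : ℂ) (n : ℕ) : ℂ := (-1) ^ n * q ^ (n * (n + 1) / 2) * iq q n

lemma iq_succ {q : ℂ} (h : NR q) (n : ℕ) :
    (1 - q ^ (n + 1)) * iq q ((n + 1 : ℕ) : ℤ) = iq q (n : ℤ) := by
  have := iq_rel h ((n + 1 : ℕ) : ℤ)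
  rw [zpow_natCast] at this
  rw [← this]; congr 1; push_cast; ring

lemma Rq_succ {q : ℂ} (h : NR q) (n : ℕ) :
    (1 - q ^ (n + 1)) * Rq q (n + 1) = - q ^ (n + 1) * Rq q n := by
  have h1 : (n + 1) * (n + 1 + 1) / 2 = n * (n + 1) / 2 + (n + 1) := by
    have : (n + 1) * (n + 1 + 1) = n * (n + 1) + 2 * (n + 1) := by ring
    rw [this, Nat.add_mul_div_left _ _ (by norm_num)]
  unfold Rq
  rw [h1, ← iq_succ h n]
  ring

lemma qbinthm {q : ℂ} (h : NR q) (y : ℂ) (l : ℕ) :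
    (∏ j ∈ Finset.range l, (1 - y * q ^ (j + 1))) * iq q l =
      ∑ p ∈ HasAntidiagonal.antidiagonal l, y ^ p.1 * Rq q p.1 * iq q (p.2 : ℤ) := by
  induction l with
  | zero => simp [Rq, iq_zero]
  | succ l ih =>
    have hne : 1 - q ^ (l + 1) ≠ 0 := by
      have := h.zpow (n := ((l + 1 : ℕ) : ℤ)) (by omega)
      rwa [zpow_natCast] at this
    apply mul_left_cancel₀ hne
    have e1 : (1 - q ^ (l + 1)) * ((∏ j ∈ Finset.range (l + 1), (1 - y * q ^ (j + 1))) *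
        iq q ((l + 1 : ℕ) : ℤ)) = (1 - y * q ^ (l + 1)) *
        ((∏ j ∈ Finset.range l, (1 - y * q ^ (j + 1))) * iq q l) := by
      rw [Finset.prod_range_succ, ← iq_succ h l]; ring
    rw [e1, ih, Finset.mul_sum, Finset.mul_sum]
    have e2 : ∀ p ∈ HasAntidiagonal.antidiagonal (l + 1),
        (1 - q ^ (l + 1)) * (y ^ p.1 * Rq q p.1 * iq q (p.2 : ℤ)) =
        y ^ p.1 * Rq q p.1 * ((1 - q ^ p.2) * iq q (p.2 : ℤ)) +
        q ^ p.2 * y ^ p.1 * ((1 - q ^ p.1) * Rq q p.1) * iq q (p.2 : ℤ) := by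
      intro p hp
      rw [HasAntidiagonal.mem_antidiagonal] at hp
      rw [← hp, pow_add]; ring
    rw [Finset.sum_congr rfl e2, Finset.sum_add_distrib,
      Finset.Nat.sum_antidiagonal_succ', Finset.Nat.sum_antidiagonal_succ]
    simp only [pow_zero, sub_self, zero_mul, mul_zero, zero_add, add_zero]
    rw [← Finset.sum_add_distrib]
    refine Finset.sum_congr rfl fun p hp => ?_
    rw [HasAntidiagonal.mem_antidiagonal] at hp
    rw [iq_succ h, Rq_succ h, ← hp]
    ring

/-- main q-Vandermonde (Durfee) sum -/
lemma durfee {q : ℂ} (h : NR q) (u : ℤ) (hu : u ≤ 0) (D : ℕ) : ∀ v : ℤ,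
    ∑ p ∈ HasAntidiagonal.antidiagonal D, q ^ ((p.1 + u) * (p.1 + v)) * iq q (p.1 + u) *
      iq q (p.1 + v) * iq q (p.2 : ℤ) = iq q (D + u) * iq q (D + v) := by
  induction D with
  | zero =>
    intro v
    rcases hu.lt_or_eq with h1 | h1
    · simp [iq_neg q h1]
    · subst h1; simp [iq_zero]
  | succ D ih =>
    intro v
    by_cases hz : ((D + 1 : ℕ) : ℤ) + u = 0
    · rw [Finset.sum_eq_single (D + 1, 0)]
      · simp only [hz]; simp [iq_zero]
      · rintro ⟨a, b⟩ hp hne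
        rw [HasAntidiagonal.mem_antidiagonal] at hp
        simp only at hp
        have : a ≠ D + 1 := by
          rintro rfl
          apply hne; simp; omega
        rw [iq_neg q (n := (a : ℤ) + u) (by omega)]; simp
      · intro hh; exact absurd (by simp) hh
    · have hne := h.zpow hz
      apply mul_left_cancel₀ hne
      have hr : (1 - q ^ (((D + 1 : ℕ) : ℤ) + u)) * (iq q (((D + 1 : ℕ) : ℤ) + u) *
          iq q (((D + 1 : ℕ) : ℤ) + v)) = iq q (D + u) * iq q (D + (v + 1)) := by
        rw [← mul_assoc, ← iq_rel h]; congr 2 <;> push_cast <;> ring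
      rw [hr, ← ih, Finset.mul_sum]
      have e2 : ∀ p ∈ HasAntidiagonal.antidiagonal (D + 1),
          (1 - q ^ (((D + 1 : ℕ) : ℤ) + u)) * (q ^ (((p.1 : ℤ) + u) * (p.1 + v)) *
            iq q (p.1 + u) * iq q (p.1 + v) * iq q (p.2 : ℤ)) =
          q ^ (((p.1 : ℤ) + u) * (p.1 + v)) * ((1 - q ^ ((p.1 : ℤ) + u)) *
            iq q (p.1 + u)) * iq q (p.1 + v) * iq q (p.2 : ℤ) +
          q ^ (((p.1 : ℤ) + u) * (p.1 + v)) * q ^ ((p.1 : ℤ) + u) *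
            iq q (p.1 + u) * iq q (p.1 + v) * ((1 - q ^ p.2) * iq q (p.2 : ℤ)) := by
        intro p hp
        rw [HasAntidiagonal.mem_antidiagonal] at hp
        have : ((D + 1 : ℕ) : ℤ) + u = (p.1 + u) + (p.2 : ℕ) := by
          rw [← hp]; push_cast; ring
        rw [this, zpow_add₀ h.1, zpow_natCast]; ring
      rw [Finset.sum_congr rfl e2, Finset.sum_add_distrib,
        Finset.Nat.sum_antidiagonal_succ, Finset.Nat.sum_antidiagonal_succ']
      have z1 : (1 - q ^ (((0 : ℕ) : ℤ) + u)) * iq q (((0 : ℕ) : ℤ) + u) = 0 := by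
        rw [← iq_rel h, iq_neg]; push_cast; omega
      rw [z1]
      simp only [pow_zero, sub_self, zero_mul, mul_zero, zero_add, add_zero]
      rw [← Finset.sum_add_distrib]
      refine Finset.sum_congr rfl fun p hp => ?_
      rw [iq_succ h, ← iq_rel h]
      have f1 : (((p.1 + 1 : ℕ) : ℤ) + u - 1) = p.1 + u := by push_cast; ring
      have f2 : (((p.1 + 1 : ℕ) : ℤ) + v) = p.1 + (v + 1) := by push_cast; ring
      have f3 : iq q ((p.1 : ℤ) + v) = (1 - q ^ ((p.1 : ℤ) + (v + 1))) *
          iq q (p.1 + (v + 1)) := by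
        rw [← iq_rel h]; congr 1; ring
      have f4 : (((p.1 + 1 : ℕ) : ℤ) + u) * (p.1 + (v + 1)) =
          (p.1 + u) * (p.1 + (v + 1)) + (p.1 + (v + 1)) := by push_cast; ring
      have f5 : ((p.1 : ℤ) + u) * (p.1 + (v + 1)) = (p.1 + u) * (p.1 + v) + (p.1 + u) := by ring
      rw [f1, f2, f3, f4, zpow_add₀ h.1, f5, zpow_add₀ h.1]
      ring

/-- the Bailey kernel -/
noncomputable def Bk (q : ℂ) (s : ℕ) (j : ℤ) : ℂ := iq q (s - j) * iq q (s + j)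

lemma PDB {q : ℂ} (h : NR q) (j : ℤ) (D : ℕ) :
    ∑ p ∈ HasAntidiagonal.antidiagonal D, q ^ (p.1 ^ 2) * Bk q p.1 j * iq q (p.2 : ℤ) =
      q ^ (j ^ 2) * Bk q D j := by
  have key : ∀ j : ℤ, 0 ≤ j →
    ∑ p ∈ HasAntidiagonal.antidiagonal D, q ^ (p.1 ^ 2) * Bk q p.1 j * iq q (p.2 : ℤ) =
      q ^ (j ^ 2) * Bk q D j := by
    intro j hj
    have := durfee h (-j) (by omega) D j
    unfold Bk
    rw [sub_eq_add_neg, ← this, Finset.mul_sum]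
    refine Finset.sum_congr rfl fun p _ => ?_
    have : q ^ (p.1 ^ 2) = q ^ (j ^ 2) * q ^ (((p.1 : ℤ) + -j) * (p.1 + j)) := by
      rw [← zpow_natCast, ← zpow_add₀ h.1]; congr 1; push_cast; ring
    rw [this, sub_eq_add_neg]; ring
  rcases le_total 0 j with hj | hj
  · exact key j hj
  · have := key (-j) (by omega)
    have hs : ∀ s, Bk q s (-j) = Bk q s j := by
      intro s; unfold Bk; rw [mul_comm]; congr 2; ring
    simpa [hs] using this

lemma PDBinv {q : ℂ} (h : NR q) (j : ℤ) (D : ℕ) :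
    ∑ p ∈ HasAntidiagonal.antidiagonal D, (q ^ p.1 * Bk q p.1 j) * Rq q p.2 =
      q ^ D * q ^ (D ^ 2) * q ^ (-j ^ 2) * Bk q D j := by
  let P : PowerSeries ℂ := PowerSeries.mk fun n => iq q (n : ℤ)
  let R : PowerSeries ℂ := PowerSeries.mk fun n => (q⁻¹) ^ n * Rq q n
  let Bs : PowerSeries ℂ := PowerSeries.mk fun n => Bk q n j
  let Cs : PowerSeries ℂ := PowerSeries.mk fun n => q ^ (n ^ 2) * Bk q n j
  have h1 : R * P = 1 := by
    ext n
    rw [PowerSeries.coeff_mul]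
    simp only [R, P, PowerSeries.coeff_mk]
    rw [← qbinthm h]
    cases n with
    | zero => simp [iq_zero]
    | succ n =>
      rw [Finset.prod_range_succ', PowerSeries.coeff_one]
      simp [h.1]
  have h2 : Cs * P = q ^ (j ^ 2) • Bs := by
    ext n
    rw [PowerSeries.coeff_mul]
    simp only [Cs, P, Bs, PowerSeries.coeff_mk, PowerSeries.coeff_smul, smul_eq_mul]
    exact PDB h j n
  have h3 : Cs = q ^ (j ^ 2) • (Bs * R) := by
    calc Cs = (Cs * P) * R := by rw [mul_assoc, mul_comm P, h1, mul_one]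
      _ = _ := by rw [h2, smul_mul_assoc]
  have h4 := congrArg (PowerSeries.coeff D) h3
  rw [PowerSeries.coeff_smul, PowerSeries.coeff_mul] at h4
  simp only [Cs, R, Bs, PowerSeries.coeff_mk, smul_eq_mul] at h4
  have h5 : q ^ D * q ^ (D ^ 2) * q ^ (-j ^ 2) * Bk q D j =
      q ^ D * q ^ (-j ^ 2) * (q ^ (D ^ 2) * Bk q D j) := by ring
  rw [h5, h4, ← mul_assoc (q ^ D * q ^ (-j ^ 2))]
  have h6 : q ^ D * q ^ (-j ^ 2) * q ^ (j ^ 2) = q ^ D := by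
    rw [mul_assoc, ← zpow_add₀ h.1]; simp
  rw [h6, Finset.mul_sum]
  refine Finset.sum_congr rfl fun p hp => ?_
  rw [HasAntidiagonal.mem_antidiagonal] at hp
  rw [← hp, pow_add, inv_pow]
  have := h.1
  field_simp


lemma conv_sum (L : ℕ) (h f g : ℕ → ℂ) (hh : ∀ D, L < D → h D = 0) :
    ∑ l ∈ range (L + 1), ∑ s ∈ range (L + 1), h (l + s) * (f l * g s) =
      ∑ D ∈ range (L + 1), h D * ∑ p ∈ HasAntidiagonal.antidiagonal D, f p.1 * g p.2 := by
  have h1 : ∀ D ∈ range (L + 1), h D * ∑ p ∈ HasAntidiagonal.antidiagonal D, f p.1 * g p.2 =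
      ∑ p ∈ range (L + 1) ×ˢ range (L + 1), if p.1 + p.2 = D then h D * (f p.1 * g p.2) else 0 := by
    intro D hD
    rw [mem_range] at hD
    rw [Finset.mul_sum, ← Finset.sum_filter]
    refine Finset.sum_congr ?_ fun _ _ => rfl
    ext p
    simp only [HasAntidiagonal.mem_antidiagonal, mem_filter, mem_product, mem_range]
    omega
  rw [Finset.sum_congr rfl h1, Finset.sum_comm (s := range (L + 1)) (t := range (L + 1) ×ˢ range (L + 1)),
    Finset.sum_product]
  refine Finset.sum_congr rfl fun l _ => Finset.sum_congr rfl fun s _ => ?_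
  rw [Finset.sum_ite_eq]
  split_ifs with h2
  · rfl
  · rw [hh _ (by simpa using h2)]; simp

/-- row vector transform -/
noncomputable def eN (q : ℂ) (L : ℕ) (e : ℕ → ℂ) : ℕ → ℕ → ℂ
  | 0, k => e k
  | n + 1, k => q ^ (k ^ 2) * ∑ i ∈ range (L + 1), iq q (i : ℤ) * eN q L e n (k + i)

lemma eN_supp (q : ℂ) (L : ℕ) (e : ℕ → ℂ) (he : ∀ k, L < k → e k = 0) (n : ℕ) :
    ∀ k, L < k → eN q L e n k = 0 := by
  induction n with
  | zero => exact he
  | succ n ih =>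
    intro k hk
    rw [eN, Finset.sum_eq_zero, mul_zero]
    intro i _
    rw [ih _ (by omega), mul_zero]

lemma eN_Bk {q : ℂ} (h : NR q) (L : ℕ) (e : ℕ → ℂ) (he : ∀ k, L < k → e k = 0) (j : ℤ) (n : ℕ) :
    ∑ k ∈ range (L + 1), eN q L e n k * Bk q k j =
      q ^ (n * j ^ 2) * ∑ k ∈ range (L + 1), e k * Bk q k j := by
  induction n with
  | zero => simp [eN]
  | succ n ih =>
    have e1 : ((n + 1 : ℕ) : ℤ) * j ^ 2 = j ^ 2 + n * j ^ 2 := by push_cast; ring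
    rw [e1, zpow_add₀ h.1, mul_assoc, ← ih]
    have e2 : ∀ k ∈ range (L + 1), eN q L e (n + 1) k * Bk q k j =
        ∑ i ∈ range (L + 1), eN q L e n (k + i) * ((q ^ (k ^ 2) * Bk q k j) * iq q (i : ℤ)) := by
      intro k _
      rw [eN, Finset.mul_sum, Finset.sum_mul]
      exact Finset.sum_congr rfl fun _ _ => by ring
    rw [Finset.sum_congr rfl e2, conv_sum L (eN q L e n) (fun k => q ^ (k ^ 2) * Bk q k j)
      (fun i => iq q (i : ℤ)) (eN_supp q L e he n), Finset.mul_sum]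
    refine Finset.sum_congr rfl fun D _ => ?_
    rw [PDB h]; ring

lemma qBinom_nat (q : ℂ) (B : ℤ) (hB : 0 ≤ B) (l : ℕ) (hq : q ≠ 0) :
    qBinom q (l + B) l = (∏ j ∈ range l, (1 - q ^ B * q ^ (j + 1))) * iq q l := by
  unfold qBinom
  rw [if_pos ⟨by omega, by omega⟩, Finset.prod_div_distrib, div_eq_mul_inv, iq_nat]
  simp only [Int.toNat_natCast]
  congr 1
  · refine Finset.prod_congr rfl fun j _ => ?_
    rw [← zpow_natCast, ← zpow_add₀ hq]; congr 2; push_cast; ring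

lemma qBinom_neg (q : ℂ) (n k : ℤ) (h : k < 0) : qBinom q n k = 0 := by
  unfold qBinom; rw [if_neg]; omega

lemma sum_shift (L k : ℕ) (g : ℕ → ℂ) (h1 : ∀ i, i < k → g i = 0) (h2 : ∀ i, L < i → g i = 0) :
    ∑ i ∈ range (L + 1), g i = ∑ l ∈ range (L + 1), g (k + l) := by
  have a1 : ∑ i ∈ range (k + (L + 1)), g i = ∑ l ∈ range (L + 1), g (k + l) := by
    rw [Finset.sum_range_add, Finset.sum_eq_zero, zero_add]
    intro i hi; exact h1 i (by simpa using hi)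
  have a2 : ∑ i ∈ range (k + (L + 1)), g i = ∑ i ∈ range (L + 1), g i := by
    rw [add_comm k, Finset.sum_range_add, add_eq_left]
    apply Finset.sum_eq_zero
    intro i _; exact h2 _ (by omega)
  rw [← a2, a1]

lemma antidiag_identity {q : ℂ} (h : NR q) (c : ℤ) (X X' : ℕ → ℂ)
    (hX : ∀ S : ℕ, q ^ (S ^ 2) * X' S =
      q ^ (c * S) * ∑ p ∈ HasAntidiagonal.antidiagonal S, X p.1 * Rq q p.2)
    (y : ℂ) (D : ℕ) :
    ∑ p ∈ HasAntidiagonal.antidiagonal D,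
      ((∏ j ∈ range p.1, (1 - y * q ^ (j + 1))) * iq q (p.1 : ℤ)) * (y ^ p.2 * X p.2) =
    ∑ p ∈ HasAntidiagonal.antidiagonal D,
      (q ^ (p.1 ^ 2) * q ^ (-c * p.1) * y ^ p.1 * X' p.1) * iq q (p.2 : ℤ) := by
  let F : PowerSeries ℂ := PowerSeries.mk fun l =>
    (∏ j ∈ range l, (1 - y * q ^ (j + 1))) * iq q (l : ℤ)
  let Xy : PowerSeries ℂ := PowerSeries.mk fun s => y ^ s * X s
  let R : PowerSeries ℂ := PowerSeries.mk fun s => y ^ s * Rq q s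
  let P : PowerSeries ℂ := PowerSeries.mk fun n => iq q (n : ℤ)
  let Y : PowerSeries ℂ := PowerSeries.mk fun S => q ^ (S ^ 2) * q ^ (-c * S) * y ^ S * X' S
  have h1 : F = R * P := by
    ext n
    rw [PowerSeries.coeff_mul]
    simp only [F, R, P, PowerSeries.coeff_mk]
    exact qbinthm h y n
  have h2 : Y = Xy * R := by
    ext n
    rw [PowerSeries.coeff_mul]
    simp only [Y, Xy, R, PowerSeries.coeff_mk]
    have : q ^ (n ^ 2) * q ^ (-c * n) * y ^ n * X' n =
        q ^ (-c * n) * y ^ n * (q ^ (n ^ 2) * X' n) := by ring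
    rw [this, hX]
    have h3 : q ^ (-c * n) * q ^ (c * n) = 1 := by
      rw [← zpow_add₀ h.1]; simp
    rw [show ∀ a b c d : ℂ, a * b * (c * d) = (a * c) * (b * d) by intros; ring, h3, one_mul,
      Finset.mul_sum]
    refine Finset.sum_congr rfl fun p hp => ?_
    rw [HasAntidiagonal.mem_antidiagonal] at hp
    rw [← hp, pow_add]; ring
  have h3 : F * Xy = Y * P := by rw [h1, h2]; ring
  have h4 := congrArg (PowerSeries.coeff D) h3
  rw [PowerSeries.coeff_mul, PowerSeries.coeff_mul] at h4
  simpa only [F, Xy, Y, P, PowerSeries.coeff_mk] using h4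

lemma step_lemma {q : ℂ} (h : NR q) (L : ℕ) (e : ℕ → ℂ) (he : ∀ k, L < k → e k = 0)
    (c : ℤ) (X X' : ℕ → ℂ)
    (hX : ∀ S : ℕ, q ^ (S ^ 2) * X' S =
      q ^ (c * S) * ∑ p ∈ HasAntidiagonal.antidiagonal S, X p.1 * Rq q p.2)
    (A : ℤ) (k : ℕ) (hB : 0 ≤ A + 2 * k + c) :
    ∑ k' ∈ range (L + 1), q ^ (k ^ 2) * qBinom q ((k' : ℤ) - k + (A + 2 * k + c)) ((k' : ℤ) - k) *
      ∑ s ∈ range (L + 1), e (k' + s) * X s * q ^ ((A + 2 * k + c) * s) =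
    ∑ s ∈ range (L + 1), (q ^ ((k + s) ^ 2) * ∑ i ∈ range (L + 1), iq q (i : ℤ) * e (k + s + i)) *
      X' s * q ^ (A * s) := by
  set B := A + 2 * k + c with hBdef
  rw [sum_shift L k]
  · have e1 : ∀ l ∈ range (L + 1), q ^ (k ^ 2) * qBinom q (((k + l : ℕ) : ℤ) - k + B)
        (((k + l : ℕ) : ℤ) - k) * ∑ s ∈ range (L + 1), e (k + l + s) * X s * q ^ (B * s) =
        ∑ s ∈ range (L + 1), (q ^ (k ^ 2) * e (k + (l + s))) *
          (((∏ j ∈ range l, (1 - q ^ B * q ^ (j + 1))) * iq q (l : ℤ)) *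
            ((q ^ B) ^ s * X s)) := by
      intro l _
      have : ((k + l : ℕ) : ℤ) - k = l := by push_cast; ring
      rw [this, qBinom_nat q B hB l h.1, Finset.mul_sum]
      refine Finset.sum_congr rfl fun s _ => ?_
      rw [zpow_mul, zpow_natCast, add_assoc]; ring
    have e2 : ∀ s ∈ range (L + 1),
        (q ^ ((k + s) ^ 2) * ∑ i ∈ range (L + 1), iq q (i : ℤ) * e (k + s + i)) *
          X' s * q ^ (A * s) =
        ∑ i ∈ range (L + 1), (q ^ (k ^ 2) * e (k + (s + i))) *
          ((q ^ (s ^ 2) * q ^ (-c * s) * (q ^ B) ^ s * X' s) * iq q (i : ℤ)) := by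
      intro s _
      rw [Finset.mul_sum, Finset.sum_mul, Finset.sum_mul]
      refine Finset.sum_congr rfl fun i _ => ?_
      have : q ^ ((k + s) ^ 2) * q ^ (A * s) =
          q ^ (k ^ 2) * (q ^ (s ^ 2) * q ^ (-c * s) * (q ^ B) ^ s) := by
        rw [← zpow_natCast, ← zpow_natCast, ← zpow_natCast, ← zpow_natCast (q ^ B), ← zpow_mul,
          ← zpow_add₀ h.1, ← zpow_add₀ h.1, ← zpow_add₀ h.1, ← zpow_add₀ h.1, hBdef]
        congr 1; push_cast; ring
      rw [← add_assoc]
      linear_combination (iq q (i : ℤ) * e (k + s + i) * X' s) * this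
    rw [Finset.sum_congr rfl e1, Finset.sum_congr rfl e2,
      conv_sum L (fun D => q ^ (k ^ 2) * e (k + D)) (fun l =>
        ((∏ j ∈ range l, (1 - q ^ B * q ^ (j + 1))) * iq q (l : ℤ)))
        (fun s => ((q ^ B) ^ s * X s)),
      conv_sum L (fun D => q ^ (k ^ 2) * e (k + D)) (fun s =>
        (q ^ (s ^ 2) * q ^ (-c * s) * (q ^ B) ^ s * X' s)) (fun i => iq q (i : ℤ))]
    · refine Finset.sum_congr rfl fun D _ => ?_
      congr 1
      exact antidiag_identity h c X X' hX (q ^ B) D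
    · intro D hD; rw [he _ (by omega), mul_zero]
    · intro D hD; rw [he _ (by omega), mul_zero]
  · intro i hi
    rw [qBinom_neg q _ _ (by omega)]; simp
  · intro i hi
    rw [Finset.sum_eq_zero, mul_zero]
    intro s _
    rw [he _ (by omega)]; simp

/-- X sequence -/
noncomputable def Xq (q : ℂ) (c : ℕ → ℤ) : ℕ → ℕ → ℂ
  | 0, s => if s = 0 then 1 else 0
  | n + 1, s => q ^ (c n * s - (s : ℤ) ^ 2) *
      ∑ p ∈ HasAntidiagonal.antidiagonal s, Xq q c n p.1 * Rq q p.2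

lemma Xq_rec {q : ℂ} (h : NR q) (c : ℕ → ℤ) (n S : ℕ) :
    q ^ (S ^ 2) * Xq q c (n + 1) S =
      q ^ (c n * S) * ∑ p ∈ HasAntidiagonal.antidiagonal S, Xq q c n p.1 * Rq q p.2 := by
  rw [Xq, ← mul_assoc, ← zpow_natCast, ← zpow_add₀ h.1]
  congr 2; push_cast; ring

def cc (r : ℕ) (n : ℕ) : ℤ := if n < r then -1 else 0

/-- value function, from the outermost variable inwards -/
noncomputable def Vq (q : ℂ) (L r : ℕ) (e : ℕ → ℂ) : ℕ → ℤ → ℕ → ℂ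
  | 0, _, k => (if r = 0 ∧ k = 0 then 0 else 1) * e k
  | n + 1, A, k => (if r = n + 1 ∧ k = 0 then 0 else 1) *
      ∑ k' ∈ range (L + 1), q ^ (k ^ 2) *
        qBinom q ((k' : ℤ) - k + (A + 2 * k + cc r n)) ((k' : ℤ) - k) *
        Vq q L r e n (A + 2 * k + cc r n) k'

noncomputable def formq (q : ℂ) (L r : ℕ) (e : ℕ → ℂ) (n : ℕ) (A : ℤ) (k : ℕ) : ℂ :=
  ∑ s ∈ range (L + 1), eN q L e n (k + s) * Xq q (cc r) n s * q ^ (A * s)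

lemma formq_zero (q : ℂ) (L r : ℕ) (e : ℕ → ℂ) (A : ℤ) (k : ℕ) :
    formq q L r e 0 A k = e k := by
  unfold formq
  rw [Finset.sum_eq_single 0]
  · simp [eN, Xq]
  · intro b _ hb; simp [Xq, hb]
  · simp

lemma formq_step {q : ℂ} (h : NR q) (L r : ℕ) (e : ℕ → ℂ) (he : ∀ k, L < k → e k = 0)
    (n : ℕ) (A : ℤ) (k : ℕ) (hB : 0 ≤ A + 2 * k + cc r n) :
    ∑ k' ∈ range (L + 1), q ^ (k ^ 2) *
        qBinom q ((k' : ℤ) - k + (A + 2 * k + cc r n)) ((k' : ℤ) - k) *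
        formq q L r e n (A + 2 * k + cc r n) k' = formq q L r e (n + 1) A k := by
  unfold formq
  exact step_lemma h L (eN q L e n) (eN_supp q L e he n) (cc r n) (Xq q (cc r) n)
    (Xq q (cc r) (n + 1)) (Xq_rec h (cc r) n) A k hB

lemma V_low {q : ℂ} (h : NR q) (L r : ℕ) (e : ℕ → ℂ) (he : ∀ k, L < k → e k = 0) (n : ℕ) :
    n ≤ r → ∀ (A : ℤ) (k : ℕ), 0 ≤ A → 1 ≤ k → Vq q L r e n A k = formq q L r e n A k := by
  induction n with
  | zero =>
    intro _ A k _ hk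
    rw [formq_zero, Vq, if_neg (by omega), one_mul]
  | succ n ih =>
    intro hn A k hA hk
    have hc : cc r n = -1 := by simp [cc]; omega
    rw [← formq_step h L r e he n A k (by omega), Vq, if_neg (by omega), one_mul]
    refine Finset.sum_congr rfl fun k' _ => ?_
    rcases lt_or_ge k' k with hk' | hk'
    · rw [qBinom_neg q _ _ (by omega)]; simp
    · rw [ih (by omega) _ _ (by omega) (by omega)]

lemma V_high {q : ℂ} (h : NR q) (L r : ℕ) (e : ℕ → ℂ) (he : ∀ k, L < k → e k = 0) (i : ℕ) :
    ∀ (A : ℤ) (k : ℕ), 0 ≤ A → (k = 0 → A = 0) → Vq q L r e (r + i) A k =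
      formq q L r e (r + i) A k - if k = 0 then formq q L r e r 0 0 else 0 := by
  induction i with
  | zero =>
    intro A k hA hk
    rw [add_zero]
    rcases Nat.eq_zero_or_pos k with h0 | h0
    · subst h0
      rw [hk rfl, if_pos rfl, sub_self]
      cases r with
      | zero => simp [Vq]
      | succ r => simp [Vq]
    · rw [if_neg (by omega), sub_zero, V_low h L r e he r le_rfl A k hA h0]
  | succ i ih =>
    intro A k hA hk
    have hc : cc r (r + i) = 0 := by simp [cc]
    rw [← add_assoc, ← formq_step h L r e he (r + i) A k (by omega), Vq, if_neg (by omega),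
      one_mul, hc]
    have e1 : ∀ k' ∈ range (L + 1), q ^ (k ^ 2) *
        qBinom q ((k' : ℤ) - k + (A + 2 * k + 0)) ((k' : ℤ) - k) *
        Vq q L r e (r + i) (A + 2 * k + 0) k' =
        q ^ (k ^ 2) * qBinom q ((k' : ℤ) - k + (A + 2 * k + 0)) ((k' : ℤ) - k) *
        formq q L r e (r + i) (A + 2 * k + 0) k' -
        if k' = 0 then (if k = 0 then formq q L r e r 0 0 else 0) else 0 := by
      intro k' _
      rcases lt_or_ge k' k with hk' | hk'
      · rw [qBinom_neg q _ _ (by omega)]; simp; omega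
      · rw [ih _ _ (by omega) (by omega)]
        by_cases h0 : k' = 0
        · subst h0
          obtain rfl : k = 0 := by omega
          rw [hk rfl]
          simp [qBinom]
        · simp [h0]
    rw [Finset.sum_congr rfl e1, Finset.sum_sub_distrib, Finset.sum_ite_eq', if_pos (by simp)]

lemma V_total {q : ℂ} (h : NR q) (L r i : ℕ) (e : ℕ → ℂ) (he : ∀ k, L < k → e k = 0) :
    ∑ k ∈ range (L + 1), Vq q L r e (r + i) 0 k =
      ∑ D ∈ range (L + 1), eN q L e (r + i) D * ∑ s ∈ range (D + 1), Xq q (cc r) (r + i) s -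
      ∑ D ∈ range (L + 1), eN q L e r D * Xq q (cc r) r D := by
  rw [Finset.sum_congr rfl fun k _ => V_high h L r e he i 0 k le_rfl (fun _ => rfl),
    Finset.sum_sub_distrib, Finset.sum_ite_eq', if_pos (by simp)]
  congr 1
  · have := conv_sum L (eN q L e (r + i)) (fun _ => 1) (Xq q (cc r) (r + i))
      (eN_supp q L e he (r + i))
    simp only [one_mul] at this
    simp only [formq, zero_mul, zpow_zero, mul_one]
    rw [this]
    refine Finset.sum_congr rfl fun D _ => ?_
    rw [Finset.Nat.sum_antidiagonal_eq_sum_range_succ_mk]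
    simp only
    rw [← Finset.sum_range_reflect]
    congr 1
    refine Finset.sum_congr rfl fun s hs => ?_
    rw [mem_range] at hs
    congr 1; omega
  · simp [formq]


def tri (j : ℤ) : ℤ := j * (j + 1) / 2

lemma tri_two (j : ℤ) : 2 * tri j = j * (j + 1) := by
  unfold tri
  exact Int.mul_ediv_cancel' (Int.even_mul_succ_self j).two_dvd

lemma tri_refl (j : ℤ) : tri (-1 - j) = tri j := by
  have h1 := tri_two j
  have h2 := tri_two (-1 - j)
  linarith

lemma tri_one_sub (j : ℤ) : tri (1 - j) = tri j - 2 * j + 1 := by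
  have h1 := tri_two j
  have h2 := tri_two (1 - j)
  linarith

lemma neg_one_refl (j : ℤ) : (-1 : ℂ) ^ (-1 - j) = -(-1) ^ j := by
  rw [zpow_sub₀ (by norm_num)]
  rcases Int.even_or_odd j with h | h
  · rw [h.neg_one_zpow]; norm_num
  · rw [h.neg_one_zpow]; norm_num

lemma neg_one_one_sub (j : ℤ) : (-1 : ℂ) ^ (1 - j) = -(-1) ^ j := by
  rw [zpow_sub₀ (by norm_num)]
  rcases Int.even_or_odd j with h | h
  · rw [h.neg_one_zpow]; norm_num
  · rw [h.neg_one_zpow]; norm_num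

/-- symmetric sum over `-M ≤ j < M` -/
noncomputable def SS (M : ℕ) (f : ℤ → ℂ) : ℂ := ∑ n ∈ range M, (f n + f (-1 - n))

lemma SS_congr (M : ℕ) {f g : ℤ → ℂ} (h : ∀ j, f j = g j) : SS M f = SS M g := by
  rw [show f = g from funext h]

lemma SS_mul (M : ℕ) (a : ℂ) (f : ℤ → ℂ) : a * SS M f = SS M (fun j => a * f j) := by
  unfold SS; rw [Finset.mul_sum]; exact Finset.sum_congr rfl fun _ _ => by ring

lemma SS_sub (M : ℕ) (f g : ℤ → ℂ) : SS M f - SS M g = SS M (fun j => f j - g j) := by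
  unfold SS; rw [← Finset.sum_sub_distrib]; exact Finset.sum_congr rfl fun _ _ => by ring

lemma SS_add (M : ℕ) (f g : ℤ → ℂ) : SS M f + SS M g = SS M (fun j => f j + g j) := by
  unfold SS; rw [← Finset.sum_add_distrib]; exact Finset.sum_congr rfl fun _ _ => by ring

lemma SS_sum {ι : Type*} (s : Finset ι) (M : ℕ) (f : ι → ℤ → ℂ) :
    ∑ i ∈ s, SS M (f i) = SS M (fun j => ∑ i ∈ s, f i j) := by
  unfold SS; rw [Finset.sum_comm]
  exact Finset.sum_congr rfl fun _ _ => by rw [Finset.sum_add_distrib]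

lemma SS_anti (M : ℕ) (f : ℤ → ℂ) (h : ∀ j, f (-1 - j) = - f j) : SS M f = 0 := by
  unfold SS; exact Finset.sum_eq_zero fun n _ => by rw [h]; ring

lemma SS_anti2 (M : ℕ) (f : ℤ → ℂ) (h : ∀ j, f (1 - j) = - f j) :
    SS M f = f (-M) + f (1 - M) := by
  unfold SS
  induction M with
  | zero => have := h 0; simp at this ⊢; rw [this]; ring
  | succ M ih =>
    rw [Finset.sum_range_succ, ih, h M]
    rw [show (1 : ℤ) - ((M + 1 : ℕ) : ℤ) = -M by push_cast; ring,
      show -((M + 1 : ℕ) : ℤ) = -1 - M by push_cast; ring]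
    ring

lemma SS_Bk_zero {q : ℂ} (M : ℕ) (f : ℤ → ℂ) :
    SS (M + 1) (fun j => f j * Bk q 0 j) = f 0 := by
  unfold SS Bk
  rw [Finset.sum_eq_single 0]
  · simp [iq_zero]; right; right; exact iq_neg q (by norm_num)
  · intro n _ hn
    beta_reduce
    rw [iq_neg q (n := ((0 : ℕ) : ℤ) - n) (by push_cast; omega),
      iq_neg q (n := ((0 : ℕ) : ℤ) + (-1 - n)) (by push_cast; omega)]
    simp
  · simp

noncomputable def dq (q : ℂ) (n : ℕ) (j : ℤ) : ℂ := (-1) ^ j * q ^ ((1 - 2 * (n : ℤ)) * tri j)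

lemma dq_refl (q : ℂ) (n : ℕ) (j : ℤ) : dq q n (-1 - j) = - dq q n j := by
  unfold dq; rw [neg_one_refl, tri_refl]; ring

lemma Bk_left {q : ℂ} (h : NR q) (s : ℕ) (j : ℤ) :
    (1 - q ^ ((s : ℤ) - j)) * Bk q s j = iq q (s - j - 1) * iq q (s + j) := by
  unfold Bk; rw [iq_rel h]; ring

lemma Bk_right {q : ℂ} (h : NR q) (s : ℕ) (j : ℤ) :
    (1 - q ^ ((s : ℤ) + j)) * Bk q s j = iq q (s - j) * iq q (s + j - 1) := by
  unfold Bk; rw [iq_rel h ((s : ℤ) + j)]; ring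

lemma SS_left {q : ℂ} (h : NR q) (M s : ℕ) (d : ℤ → ℂ) (hd : ∀ j, d (-1 - j) = - d j) :
    SS M (fun j => d j * ((1 - q ^ ((s : ℤ) - j)) * Bk q s j)) = 0 := by
  apply SS_anti
  intro j
  rw [Bk_left h, Bk_left h, hd, show (s : ℤ) - (-1 - j) - 1 = s + j by ring,
    show (s : ℤ) + (-1 - j) = s - j - 1 by ring]
  ring

lemma SS_shift {q : ℂ} (h : NR q) (M s : ℕ) (d : ℤ → ℂ) (hd : ∀ j, d (-1 - j) = - d j) :
    SS M (fun j => d j * Bk q s j) = q ^ s * SS M (fun j => d j * q ^ (-j) * Bk q s j) := by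
  rw [← sub_eq_zero, SS_mul, SS_sub, ← SS_left h M s d hd]
  refine SS_congr M fun j => ?_
  rw [sub_eq_add_neg (s : ℤ), zpow_add₀ h.1, zpow_natCast]; ring

lemma SS_base {q : ℂ} (h : NR q) (L s : ℕ) (hs : s ≤ L) :
    SS (L + 1) (fun j => dq q 0 j * Bk q s j) = if s = 0 then 1 else 0 := by
  split_ifs with h0
  · subst h0; rw [SS_Bk_zero]; simp [dq, tri]
  · have h1 : (1 - q ^ (2 * (s : ℤ))) ≠ 0 := h.zpow (by omega)
    have h2 := SS_left h (L + 1) s (dq q 0) (dq_refl q 0)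
    have h3 : SS (L + 1) (fun j => dq q 0 j * q ^ ((s : ℤ) - j) *
        ((1 - q ^ ((s : ℤ) + j)) * Bk q s j)) = 0 := by
      rw [SS_anti2]
      · rw [Bk_right h, Bk_right h, iq_neg q (n := (s : ℤ) + -((L + 1 : ℕ) : ℤ) - 1) (by push_cast; omega),
          iq_neg q (n := (s : ℤ) + (1 - ((L + 1 : ℕ) : ℤ)) - 1) (by push_cast; omega)]
        simp
      · intro j
        rw [Bk_right h, Bk_right h, show (s : ℤ) - (1 - j) = s + j - 1 by ring,
          show (s : ℤ) + (1 - j) - 1 = s - j by ring]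
        unfold dq
        rw [neg_one_one_sub, tri_one_sub]
        have : q ^ ((1 - 2 * ((0 : ℕ) : ℤ)) * (tri j - 2 * j + 1)) * q ^ ((s : ℤ) + j - 1) =
            q ^ ((1 - 2 * ((0 : ℕ) : ℤ)) * tri j) * q ^ ((s : ℤ) - j) := by
          rw [← zpow_add₀ h.1, ← zpow_add₀ h.1]; congr 1; push_cast; ring
        linear_combination (-(-1) ^ j * iq q (s - j) * iq q (s + j - 1)) * this
    have h4 : (1 - q ^ (2 * (s : ℤ))) * SS (L + 1) (fun j => dq q 0 j * Bk q s j) = 0 := by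
      rw [SS_mul, ← add_zero (0 : ℂ)]
      nth_rw 1 [← h2]; rw [← h3, SS_add]
      refine SS_congr _ fun j => ?_
      have : q ^ (2 * (s : ℤ)) = q ^ ((s : ℤ) - j) * q ^ ((s : ℤ) + j) := by
        rw [← zpow_add₀ h.1]; congr 1; ring
      rw [this]; ring
    exact (mul_eq_zero.mp h4).resolve_left h1

lemma SS_step {q : ℂ} (h : NR q) (M S : ℕ) (X : ℕ → ℂ) (x : ℤ → ℂ)
    (hX : ∀ s, s ≤ S → X s = q ^ s * SS M (fun j => x j * Bk q s j)) :
    ∑ p ∈ HasAntidiagonal.antidiagonal S, X p.1 * Rq q p.2 =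
      q ^ S * q ^ (S ^ 2) * SS M (fun j => x j * q ^ (-j ^ 2) * Bk q S j) := by
  have h1 : ∀ p ∈ HasAntidiagonal.antidiagonal S, X p.1 * Rq q p.2 =
      SS M (fun j => x j * (q ^ p.1 * Bk q p.1 j * Rq q p.2)) := by
    intro p hp
    rw [HasAntidiagonal.mem_antidiagonal] at hp
    rw [hX p.1 (by omega), mul_assoc, mul_comm (SS M _), ← mul_assoc, SS_mul]
    exact SS_congr _ fun j => by ring
  rw [Finset.sum_congr rfl h1, SS_sum, SS_mul]
  refine SS_congr _ fun j => ?_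
  rw [← Finset.mul_sum, PDBinv h]; ring

lemma X_low {q : ℂ} (h : NR q) (L r n : ℕ) : n ≤ r → ∀ s, s ≤ L →
    Xq q (cc r) n s = SS (L + 1) (fun j => dq q n j * Bk q s j) := by
  induction n with
  | zero => intro _ s hs; rw [SS_base h L s hs, Xq]
  | succ n ih =>
    intro hn S hS
    have hc : cc r n = -1 := by simp [cc]; omega
    have h1 := Xq_rec h (cc r) n S
    rw [SS_step h (L + 1) S _ (fun j => dq q n j * q ^ (-j)), hc] at h1
    · have h2 : q ^ (-1 * (S : ℤ)) * q ^ S = 1 := by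
        rw [← zpow_natCast, ← zpow_add₀ h.1]; simp
      have h3 : q ^ (S ^ 2) ≠ 0 := pow_ne_zero _ h.1
      apply mul_left_cancel₀ h3
      rw [h1, ← mul_assoc, ← mul_assoc, h2, one_mul]
      congr 1
      refine SS_congr _ fun j => ?_
      have : q ^ ((1 - 2 * (n : ℤ)) * tri j) * q ^ (-j) * q ^ (-j ^ 2) =
          q ^ ((1 - 2 * ((n + 1 : ℕ) : ℤ)) * tri j) := by
        rw [← zpow_add₀ h.1, ← zpow_add₀ h.1]; congr 1; push_cast
        linear_combination tri_two j
      unfold dq; rw [← this]; ring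
    · intro s hs
      rw [ih (by omega) s (by omega), SS_shift h _ _ _ (dq_refl q n)]

lemma X_high {q : ℂ} (h : NR q) (L r i : ℕ) : ∀ s, s ≤ L →
    Xq q (cc r) (r + i) s =
      q ^ s * SS (L + 1) (fun j => dq q r j * q ^ (-j - i * j ^ 2) * Bk q s j) := by
  induction i with
  | zero =>
    intro s hs
    rw [add_zero, X_low h L r r le_rfl s hs, SS_shift h _ _ _ (dq_refl q r)]
    simp
  | succ i ih =>
    intro S hS
    have hc : cc r (r + i) = 0 := by simp [cc]
    have h1 := Xq_rec h (cc r) (r + i) S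
    rw [SS_step h (L + 1) S _ (fun j => dq q r j * q ^ (-j - i * j ^ 2)), hc] at h1
    · have h3 : q ^ (S ^ 2) ≠ 0 := pow_ne_zero _ h.1
      apply mul_left_cancel₀ h3
      rw [← add_assoc, h1, zero_mul, zpow_zero, one_mul, mul_comm (q ^ S), mul_assoc]
      congr 2
      refine SS_congr _ fun j => ?_
      have : q ^ (-j - ((i + 1 : ℕ) : ℤ) * j ^ 2) = q ^ (-j - i * j ^ 2) * q ^ (-j ^ 2) := by
        rw [← zpow_add₀ h.1]; congr 1; push_cast; ring
      rw [this]; ring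
    · intro s hs
      exact ih s (by omega)

noncomputable def th (q : ℂ) (t m : ℕ) (j : ℤ) : ℂ :=
  (-1) ^ j * q ^ (-(2 * (t : ℤ) + 3) * tri j + (m + 1) * j)

/-- the coefficient -/
noncomputable def Cf (q : ℂ) (t m : ℕ) (n : ℕ) : ℂ :=
  (1 - q ^ (2 * ((n : ℤ) + 1))) * q ^ (2 * ((n : ℤ) + 1) ^ 2 - (n + 1)) * SS (n + 1) (th q t m)

noncomputable def Gq (q : ℂ) (K : ℕ) (N : ℤ) : ℂ :=
  q ^ (2 * N ^ 2 - 2 * N) * (iq q (K - N) * iq q (K + N - 1))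

lemma abel (S G : ℕ → ℂ) (h0 : S 0 = 0) (L : ℕ) :
    ∑ n ∈ range L, S (n + 1) * (G n - G (n + 1)) =
      ∑ n ∈ range (L + 1), (S (n + 1) - S n) * G n - S (L + 1) * G L := by
  induction L with
  | zero => simp [h0]
  | succ L ih => rw [Finset.sum_range_succ, ih, Finset.sum_range_succ _ (L + 1)]; ring

lemma Cf_G {q : ℂ} (h : NR q) (K : ℕ) (N : ℤ) :
    (1 - q ^ (2 * N)) * q ^ (2 * N ^ 2 - N) * (Bk q K N * (q ^ N + q ^ (-N) - q ^ K)) =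
      Gq q K N - Gq q K (N + 1) := by
  have e1 : Gq q K N = q ^ (2 * N ^ 2 - 2 * N) * ((1 - q ^ ((K : ℤ) + N)) * Bk q K N) := by
    rw [Bk_right h]; rfl
  have e2 : Gq q K (N + 1) = q ^ (2 * N ^ 2 + 2 * N) * ((1 - q ^ ((K : ℤ) - N)) * Bk q K N) := by
    rw [Bk_left h]; unfold Gq; congr 2
    · ring
    · congr 1; ring
    · congr 1; ring
  rw [e1, e2]
  have hq := h.1
  have hz : q ^ N ≠ 0 := zpow_ne_zero _ hq
  rw [show 2 * N ^ 2 - N = 2 * N ^ 2 + -N by ring, show 2 * N ^ 2 - 2 * N = 2 * N ^ 2 + (-N + -N) by ring,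
    show 2 * N = N + N by ring, sub_eq_add_neg (K : ℤ)]
  simp only [zpow_add₀ hq, zpow_neg, zpow_natCast]
  field_simp
  ring

lemma th_G {q : ℂ} (h : NR q) (r i K : ℕ) (j : ℤ) :
    dq q r j * q ^ (-(i : ℤ) * j ^ 2) * (Bk q K j * (q ^ j - q ^ K)) =
      th q (r + i) i j * Gq q K (1 + j) := by
  have e1 : q ^ j - q ^ K = q ^ j * (1 - q ^ ((K : ℤ) - j)) := by
    rw [sub_eq_add_neg (K : ℤ), zpow_add₀ h.1, zpow_neg, zpow_natCast]
    have hz : q ^ j ≠ 0 := zpow_ne_zero _ h.1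
    field_simp
  have e2 : Bk q K j * (q ^ j - q ^ K) = q ^ j * (iq q (K - j - 1) * iq q (K + j)) := by
    rw [e1, ← Bk_left h]; ring
  rw [e2]
  unfold dq th Gq
  rw [show (K : ℤ) - (1 + j) = K - j - 1 by ring, show (K : ℤ) + (1 + j) - 1 = K + j by ring]
  have : q ^ ((1 - 2 * (r : ℤ)) * tri j) * q ^ (-(i : ℤ) * j ^ 2) * q ^ j =
      q ^ (-(2 * ((r + i : ℕ) : ℤ) + 3) * tri j + (i + 1) * j) * q ^ (2 * (1 + j) ^ 2 - 2 * (1 + j)) := by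
    rw [← zpow_add₀ h.1, ← zpow_add₀ h.1, ← zpow_add₀ h.1]; congr 1; push_cast
    linear_combination ((i : ℤ) + 2) * tri_two j
  linear_combination ((-1) ^ j * (iq q (K - j - 1) * iq q (K + j))) * this

lemma Gq_refl (q : ℂ) (K : ℕ) (N : ℤ) : Gq q K (1 - N) = Gq q K N := by
  unfold Gq
  rw [mul_comm (iq q _)]
  congr 2
  · ring
  · congr 1; ring
  · congr 1; ring

lemma beta_key {q : ℂ} (h : NR q) (L r i K : ℕ) (hK : K ≤ L) :
    SS (L + 1) (fun j => dq q r j * q ^ (-(i : ℤ) * j ^ 2) * (Bk q K j * (q ^ j - q ^ K))) =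
    ∑ n ∈ range L, Cf q (r + i) i n *
      (Bk q K ((n : ℤ) + 1) * (q ^ ((n : ℤ) + 1) + q ^ (-((n : ℤ) + 1)) - q ^ K)) := by
  have h1 : ∀ n ∈ range L, Cf q (r + i) i n *
      (Bk q K ((n : ℤ) + 1) * (q ^ ((n : ℤ) + 1) + q ^ (-((n : ℤ) + 1)) - q ^ K)) =
      SS (n + 1) (th q (r + i) i) * (Gq q K ((n : ℤ) + 1) - Gq q K (((n + 1 : ℕ) : ℤ) + 1)) := by
    intro n _
    have := Cf_G h K ((n : ℤ) + 1)
    push_cast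
    rw [← this]; unfold Cf; ring
  rw [Finset.sum_congr rfl h1, abel (fun n => SS n (th q (r + i) i)) (fun n => Gq q K ((n : ℤ) + 1))
    (by simp [SS]) L]
  have h2 : Gq q K ((L : ℤ) + 1) = 0 := by
    unfold Gq; rw [iq_neg q (by omega)]; simp
  rw [h2, mul_zero, sub_zero]
  simp only [th_G h]
  unfold SS
  refine Finset.sum_congr rfl fun n _ => ?_
  rw [Finset.sum_range_succ]
  beta_reduce
  rw [show (1 : ℤ) + (-1 - n) = 1 - (n + 1) by ring, Gq_refl, add_comm (1 : ℤ)]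
  ring

lemma Bk_diff {q : ℂ} (h : NR q) (K : ℕ) (j : ℤ) :
    Bk q (K + 1) j - Bk q K j =
      q ^ (K + 1) * (Bk q (K + 1) j * (q ^ j + q ^ (-j) - q ^ (K + 1))) := by
  have e : Bk q K j = (1 - q ^ (((K + 1 : ℕ) : ℤ) - j)) * ((1 - q ^ (((K + 1 : ℕ) : ℤ) + j)) *
      Bk q (K + 1) j) := by
    rw [Bk_right h]
    have := iq_rel h (((K + 1 : ℕ) : ℤ) - j)
    rw [← mul_assoc, ← this]; unfold Bk; congr 2 <;> push_cast <;> ring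
  rw [e, sub_eq_add_neg ((K + 1 : ℕ) : ℤ), zpow_add₀ h.1, zpow_add₀ h.1, zpow_natCast, zpow_neg]
  have hz : q ^ j ≠ 0 := zpow_ne_zero _ h.1
  field_simp
  ring

lemma beta_lem {q : ℂ} (h : NR q) (L r i D : ℕ) (hD : D ≤ L) :
    ∑ s ∈ range (D + 1), Xq q (cc r) (r + i) s =
      SS (L + 1) (fun j => dq q r j * q ^ (-(i : ℤ) * j ^ 2) * Bk q D j) -
      ∑ n ∈ range L, Cf q (r + i) i n * Bk q D ((n : ℤ) + 1) := by
  induction D with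
  | zero =>
    rw [Finset.sum_range_one, X_high h L r i 0 hD, SS_Bk_zero, SS_Bk_zero, Finset.sum_eq_zero]
    · simp
    · intro n _
      unfold Bk; rw [iq_neg q (by push_cast; omega)]; simp
  | succ K ih =>
    rw [Finset.sum_range_succ, ih (by omega), X_high h L r i (K + 1) hD]
    have h1 := beta_key h L r i (K + 1) hD
    have h2 : ∑ n ∈ range L, Cf q (r + i) i n * Bk q (K + 1) ((n : ℤ) + 1) -
        ∑ n ∈ range L, Cf q (r + i) i n * Bk q K ((n : ℤ) + 1) =
        q ^ (K + 1) * SS (L + 1) (fun j => dq q r j * q ^ (-(i : ℤ) * j ^ 2) *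
          (Bk q (K + 1) j * (q ^ j - q ^ (K + 1)))) := by
      rw [h1, Finset.mul_sum, ← Finset.sum_sub_distrib]
      refine Finset.sum_congr rfl fun n _ => ?_
      rw [← mul_sub, Bk_diff h]; ring
    have h3 : SS (L + 1) (fun j => dq q r j * q ^ (-(i : ℤ) * j ^ 2) * Bk q (K + 1) j) -
        SS (L + 1) (fun j => dq q r j * q ^ (-(i : ℤ) * j ^ 2) * Bk q K j) =
        q ^ (K + 1) * SS (L + 1) (fun j => dq q r j * q ^ (-(i : ℤ) * j ^ 2) *
          (Bk q (K + 1) j * (q ^ j - q ^ (K + 1)))) +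
        q ^ (K + 1) * SS (L + 1) (fun j => dq q r j * q ^ (-j - i * j ^ 2) * Bk q (K + 1) j) := by
      rw [SS_sub, SS_mul, SS_mul, SS_add]
      refine SS_congr _ fun j => ?_
      rw [← mul_sub, Bk_diff h, show -j - (i : ℤ) * j ^ 2 = -j + -i * j ^ 2 by ring,
        zpow_add₀ h.1 (-j)]
      ring
    linear_combination h2 - h3

lemma SS_swap {q : ℂ} (L M : ℕ) (a : ℕ → ℂ) (x : ℤ → ℂ) :
    ∑ D ∈ range L, a D * SS M (fun j => x j * Bk q D j) =
      SS M (fun j => x j * ∑ D ∈ range L, a D * Bk q D j) := by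
  simp only [SS_mul]
  rw [SS_sum]
  refine SS_congr _ fun j => ?_
  rw [Finset.mul_sum]; exact Finset.sum_congr rfl fun _ _ => by ring

lemma V_final {q : ℂ} (h : NR q) (L r i : ℕ) (e : ℕ → ℂ) (he : ∀ k, L < k → e k = 0) :
    ∑ k ∈ range (L + 1), Vq q L r e (r + i) 0 k =
      - ∑ n ∈ range L, Cf q (r + i) i n * (q ^ (((r + i : ℕ) : ℤ) * ((n : ℤ) + 1) ^ 2) *
        ∑ k ∈ range (L + 1), e k * Bk q k ((n : ℤ) + 1)) := by
  rw [V_total h L r i e he]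
  have h1 : ∀ D ∈ range (L + 1), eN q L e (r + i) D * ∑ s ∈ range (D + 1), Xq q (cc r) (r + i) s =
      eN q L e (r + i) D * SS (L + 1) (fun j => dq q r j * q ^ (-(i : ℤ) * j ^ 2) * Bk q D j) -
      ∑ n ∈ range L, Cf q (r + i) i n * (eN q L e (r + i) D * Bk q D ((n : ℤ) + 1)) := by
    intro D hD
    rw [mem_range] at hD
    rw [beta_lem h L r i D (by omega), mul_sub, Finset.mul_sum]
    congr 1
    exact Finset.sum_congr rfl fun _ _ => by ring
  have h2 : ∀ D ∈ range (L + 1), eN q L e r D * Xq q (cc r) r D =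
      eN q L e r D * SS (L + 1) (fun j => dq q r j * Bk q D j) := by
    intro D hD
    rw [mem_range] at hD
    rw [X_low h L r r le_rfl D (by omega)]
  rw [Finset.sum_congr rfl h1, Finset.sum_congr rfl h2, Finset.sum_sub_distrib, SS_swap, SS_swap,
    Finset.sum_comm]
  simp only [← Finset.mul_sum, eN_Bk h L e he]
  have h3 : SS (L + 1) (fun j => dq q r j * q ^ (-(i : ℤ) * j ^ 2) *
      (q ^ (((r + i : ℕ) : ℤ) * j ^ 2) * ∑ k ∈ range (L + 1), e k * Bk q k j)) =
      SS (L + 1) (fun j => dq q r j * (q ^ ((r : ℤ) * j ^ 2) * ∑ k ∈ range (L + 1), e k * Bk q k j)) := by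
    refine SS_congr _ fun j => ?_
    have : q ^ ((r : ℤ) * j ^ 2) = q ^ (-(i : ℤ) * j ^ 2) * q ^ (((r + i : ℕ) : ℤ) * j ^ 2) := by
      rw [← zpow_add₀ h.1]; congr 1; push_cast; ring
    rw [this]; ring
  rw [h3]; ring


lemma sum_pi_succ (n : ℕ) (R : Finset ℕ) (F : (Fin (n + 1) → ℕ) → ℂ) :
    ∑ K ∈ Fintype.piFinset (fun _ : Fin (n + 1) => R), F K =
      ∑ k ∈ R, ∑ K ∈ Fintype.piFinset (fun _ : Fin n => R), F (Fin.cons k K) := by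
  rw [← Finset.sum_product']
  symm
  refine Finset.sum_nbij' (fun p => Fin.cons p.1 p.2) (fun K => (K 0, Fin.tail K)) ?_ ?_ ?_ ?_ ?_
  · intro p hp
    simp only [mem_product, Fintype.mem_piFinset] at hp ⊢
    intro a
    refine Fin.cases ?_ ?_ a
    · simpa using hp.1
    · intro i; simpa using hp.2 i
  · intro K hK
    simp only [mem_product, Fintype.mem_piFinset] at hK ⊢
    exact ⟨hK 0, fun i => hK _⟩
  · intro p _; simp
  · intro K _; simp
  · intro p _; rfl

/-- recursive product -/
noncomputable def Phi (q : ℂ) (r : ℕ) (e : ℕ → ℂ) : (n : ℕ) → ℤ → (Fin (n + 1) → ℕ) → ℂ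
  | 0, _, K => (if r = 0 ∧ K 0 = 0 then 0 else 1) * e (K 0)
  | n + 1, A, K => (if r = n + 1 ∧ K 0 = 0 then 0 else 1) *
        (q ^ (K 0 ^ 2) *
        qBinom q ((K 1 : ℤ) - K 0 + (A + 2 * K 0 + cc r n)) ((K 1 : ℤ) - K 0) *
        Phi q r e n (A + 2 * K 0 + cc r n) (Fin.tail K))

lemma Phi_sum (q : ℂ) (L r : ℕ) (e : ℕ → ℂ) (n : ℕ) : ∀ (A : ℤ) (k : ℕ),
    ∑ K ∈ Fintype.piFinset (fun _ : Fin n => range (L + 1)), Phi q r e n A (Fin.cons k K) =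
      Vq q L r e n A k := by
  induction n with
  | zero => intro A k; simp [Phi, Vq]
  | succ n ih =>
    intro A k
    rw [sum_pi_succ, Vq, Finset.mul_sum]
    refine Finset.sum_congr rfl fun k' _ => ?_
    rw [← ih, Finset.mul_sum, Finset.mul_sum]
    refine Finset.sum_congr rfl fun K _ => ?_
    rw [Phi]
    simp only [Fin.cons_zero, Fin.tail_cons, Fin.cons_one]

lemma Phi_closed (q : ℂ) (r : ℕ) (e : ℕ → ℂ) (n : ℕ) : ∀ (A : ℤ) (K : Fin (n + 1) → ℕ),
    Phi q r e n A K = (if ∀ i : Fin (n + 1), (i : ℕ) + r = n → K i ≠ 0 then 1 else 0) *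
      (e (K (Fin.last n)) * ∏ i : Fin n, (q ^ (K i.castSucc ^ 2) *
        qBinom q ((K i.succ : ℤ) - (K i.castSucc : ℤ) + (A +
          ∑ j : Fin (n + 1), if (j : ℕ) ≤ (i : ℕ) then (2 * (K j : ℤ) + cc r (n - 1 - j)) else 0))
        ((K i.succ : ℤ) - (K i.castSucc : ℤ)))) := by
  induction n with
  | zero =>
    intro A K
    rw [Phi]
    simp only [Fin.prod_univ_zero, mul_one]
    congr 1
    by_cases hr : r = 0 <;> by_cases hk : K 0 = 0 <;> simp [hr, hk]
  | succ n ih =>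
    intro A K
    rw [Phi, ih, Fin.prod_univ_succ]
    have h1 : (if ∀ i : Fin (n + 1 + 1), (i : ℕ) + r = n + 1 → K i ≠ 0 then (1 : ℂ) else 0) =
        (if r = n + 1 ∧ K 0 = 0 then 0 else 1) *
        (if ∀ i : Fin (n + 1), (i : ℕ) + r = n → Fin.tail K i ≠ 0 then 1 else 0) := by
      have hiff := Fin.forall_fin_succ (P := fun i : Fin (n + 1 + 1) => (i : ℕ) + r = n + 1 → K i ≠ 0)
      simp only [hiff]
      have : ∀ i : Fin (n + 1), ((i.succ : ℕ) + r = n + 1 → K i.succ ≠ 0) ↔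
          ((i : ℕ) + r = n → Fin.tail K i ≠ 0) := by
        intro i
        rw [Fin.val_succ, show ((i : ℕ) + 1 + r = n + 1) ↔ ((i : ℕ) + r = n) by omega]; rfl
      simp only [this]
      by_cases hr : r = n + 1 <;> by_cases hk : K 0 = 0 <;> simp [hr, hk]
    rw [h1]
    have h2 : (∑ j : Fin (n + 1 + 1), if (j : ℕ) ≤ ((0 : Fin (n + 1)) : ℕ) then
        (2 * (K j : ℤ) + cc r (n + 1 - 1 - j)) else 0) = 2 * K 0 + cc r n := by
      rw [Fin.sum_univ_succ]
      simp
    rw [h2]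
    have h3 : ∀ i : Fin n, (∑ j : Fin (n + 1 + 1), if (j : ℕ) ≤ (i.succ : ℕ) then
        (2 * (K j : ℤ) + cc r (n + 1 - 1 - j)) else 0) = 2 * K 0 + cc r n +
        ∑ j : Fin (n + 1), if (j : ℕ) ≤ (i : ℕ) then (2 * (Fin.tail K j : ℤ) + cc r (n - 1 - j)) else 0 := by
      intro i
      rw [Fin.sum_univ_succ]
      congr 1
      · refine Finset.sum_congr rfl fun j _ => ?_
        simp only [Fin.val_succ, add_le_add_iff_right, Fin.tail]
        rw [show n + 1 - 1 - ((j : ℕ) + 1) = n - 1 - j by omega]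
    simp only [h3]
    simp only [Fin.tail, Fin.succ_last, Fin.castSucc_zero, Fin.succ_zero_eq_one, ← Fin.succ_castSucc,
      ← add_assoc]
    ring

lemma UtProdM_eq (q : ℂ) (t m : ℕ) (hmt : m ≤ t) (K : Fin (t + 1) → ℕ) :
    UtProdM q t m K = ∏ i : Fin t, (q ^ (K i.castSucc ^ 2) *
        qBinom q ((K i.succ : ℤ) - (K i.castSucc : ℤ) + (0 +
          ∑ j : Fin (t + 1), if (j : ℕ) ≤ (i : ℕ) then (2 * (K j : ℤ) + cc (t - m) (t - 1 - j)) else 0))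
        ((K i.succ : ℤ) - (K i.castSucc : ℤ))) := by
  unfold UtProdM
  refine Finset.prod_congr rfl fun i _ => ?_
  congr 2
  rw [Finset.sum_filter, zero_add]
  have h1 : (((i : ℕ) : ℤ) + 1) = ∑ j : Fin (t + 1), if (j : ℕ) ≤ (i : ℕ) then (1 : ℤ) else 0 := by
    rw [Fin.sum_univ_eq_sum_range (fun j => if j ≤ (i : ℕ) then (1 : ℤ) else 0) (t + 1),
      ← Finset.sum_filter, Finset.sum_const, nsmul_eq_mul, mul_one]
    have : (range (t + 1)).filter (fun j => j ≤ (i : ℕ)) = range ((i : ℕ) + 1) := by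
      ext j; simp only [mem_filter, mem_range]; have := i.2; omega
    rw [this, card_range]; push_cast; ring
  rw [h1, sub_add, ← Finset.sum_sub_distrib, sub_eq_add_neg, ← Finset.sum_neg_distrib]
  congr 1
  refine Finset.sum_congr rfl fun j _ => ?_
  have := i.2
  unfold cc
  split_ifs <;> omega

lemma box_eq {q : ℂ} (h : NR q) (L t m : ℕ) (hmt : m ≤ t) (e : ℕ → ℂ) (he : ∀ k, L < k → e k = 0) :
    ∑ K ∈ Fintype.piFinset (fun _ : Fin (t + 1) => range (L + 1)),
      (if 1 ≤ K ⟨m, Nat.lt_succ_of_le hmt⟩ then e (K (Fin.last t)) * UtProdM q t m K else 0) =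
      - ∑ n ∈ range L, Cf q t m n * (q ^ ((t : ℤ) * ((n : ℤ) + 1) ^ 2) *
        ∑ k ∈ range (L + 1), e k * Bk q k ((n : ℤ) + 1)) := by
  have h0 := V_final h L (t - m) m e he
  rw [show t - m + m = t by omega] at h0
  rw [← h0, sum_pi_succ]
  refine Finset.sum_congr rfl fun k _ => ?_
  rw [← Phi_sum]
  refine Finset.sum_congr rfl fun K _ => ?_
  rw [Phi_closed, ← UtProdM_eq q t m hmt]
  generalize (Fin.cons k K : Fin (t + 1) → ℕ) = K'
  have : (∀ i : Fin (t + 1), (i : ℕ) + (t - m) = t → K' i ≠ 0) ↔ 1 ≤ K' ⟨m, Nat.lt_succ_of_le hmt⟩ := by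
    constructor
    · intro h; exact Nat.one_le_iff_ne_zero.mpr (h _ (by simp; omega))
    · intro h i hi
      have : i = ⟨m, Nat.lt_succ_of_le hmt⟩ := Fin.ext (by simp; omega)
      rw [this]; omega
  simp only [this]
  split_ifs <;> simp

lemma telescope {q x : ℂ} (h : NR q) (hx : x ≠ 0) (n : ℕ) (h1 : 1 - x * q ^ (n + 1) ≠ 0)
    (h2 : 1 - q ^ (n + 1) / x ≠ 0) (L : ℕ) :
    ∑ k ∈ range (L + 1), qPoch q (x * q) (k - 1) * qPoch q (q / x) (k - 1) * q ^ k *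
      Bk q k ((n : ℤ) + 1) =
    q ^ (n + 1) / ((1 - x * q ^ (n + 1)) * (1 - q ^ (n + 1) / x)) *
      (qPoch q (x * q) L * qPoch q (q / x) L * Bk q L ((n : ℤ) + 1)) := by
  induction L with
  | zero =>
    have : Bk q 0 ((n : ℤ) + 1) = 0 := by
      unfold Bk; rw [iq_neg q (by push_cast; omega)]; simp
    simp [this]
  | succ L ih =>
    rw [Finset.sum_range_succ, ih, Nat.add_sub_cancel]
    have h3 := Bk_diff h L ((n : ℤ) + 1)
    have h4 : Bk q L ((n : ℤ) + 1) = Bk q (L + 1) ((n : ℤ) + 1) - q ^ (L + 1) *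
      (Bk q (L + 1) ((n : ℤ) + 1) * (q ^ (n + 1) + (q ^ (n + 1))⁻¹ - q ^ (L + 1))) := by
      rw [← zpow_natCast q (n + 1), ← zpow_neg]; push_cast; linear_combination -h3
    rw [h4]
    have e1 : qPoch q (x * q) (L + 1) = qPoch q (x * q) L * (1 - x * q ^ (L + 1)) := by
      unfold qPoch; rw [Finset.prod_range_succ]; ring
    have e2 : qPoch q (q / x) (L + 1) = qPoch q (q / x) L * (1 - q ^ (L + 1) / x) := by
      unfold qPoch; rw [Finset.prod_range_succ]; ring
    rw [e1, e2]
    have hz : q ^ (n + 1) ≠ 0 := pow_ne_zero _ h.1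
    generalize q ^ (n + 1) = z at *
    generalize q ^ (L + 1) = w at *
    have h5 : x - z ≠ 0 := by
      intro h0; apply h2; rw [show z = x by linear_combination -h0]; simp [hx]
    have hc : z / ((1 - x * z) * (1 - z / x)) * (z + z⁻¹ - x - x⁻¹) = 1 := by
      have e : (1 - x * z) * (1 - z / x) = z * (z + z⁻¹ - x - x⁻¹) := by field_simp; ring
      rw [div_mul_eq_mul_div, ← e, div_self (mul_ne_zero h1 h2)]
    have hxx : x * x⁻¹ = 1 := mul_inv_cancel₀ hx
    generalize z / ((1 - x * z) * (1 - z / x)) = c at *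
    rw [div_eq_mul_inv w]
    generalize qPoch q (x * q) L = Q1
    generalize qPoch q (q / x) L = Q2
    generalize Bk q (L + 1) ((n : ℤ) + 1) = B
    linear_combination (-(Q1 * Q2 * B * w)) * hc - (Q1 * Q2 * B * c * w ^ 2) * hxx

/-- limiting coefficient -/
noncomputable def ac (q x : ℂ) (t m n : ℕ) : ℂ :=
  q ^ (((t : ℤ) + 2) * ((n : ℤ) + 1) ^ 2) * SS (n + 1) (th q t m) *
    ((1 - q ^ (2 * (n + 1))) / ((1 - x * q ^ (n + 1)) * (1 - q ^ (n + 1) / x)))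

lemma box_final {q x : ℂ} (h : NR q) (hx : x ≠ 0) (h1 : ∀ n : ℕ, 1 - x * q ^ (n + 1) ≠ 0)
    (h2 : ∀ n : ℕ, 1 - q ^ (n + 1) / x ≠ 0) (L t m : ℕ) (hmt : m ≤ t) :
    ∑ K ∈ Fintype.piFinset (fun _ : Fin (t + 1) => range (L + 1)),
      (if 1 ≤ K ⟨m, Nat.lt_succ_of_le hmt⟩ then UtTermM q x t m K else 0) =
      - (qPoch q (x * q) L * qPoch q (q / x) L *
        ∑ n ∈ range L, ac q x t m n * Bk q L ((n : ℤ) + 1)) := by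
  let e : ℕ → ℂ := fun k => if k ≤ L then
    qPoch q (x * q) (k - 1) * qPoch q (q / x) (k - 1) * q ^ k else 0
  have he : ∀ k, L < k → e k = 0 := by
    intro k hk; simp only [e]; rw [if_neg (by omega)]
  have h3 := box_eq h L t m hmt e he
  have h4 : ∀ K ∈ Fintype.piFinset (fun _ : Fin (t + 1) => range (L + 1)),
      (if 1 ≤ K ⟨m, Nat.lt_succ_of_le hmt⟩ then UtTermM q x t m K else 0) =
      (if 1 ≤ K ⟨m, Nat.lt_succ_of_le hmt⟩ then e (K (Fin.last t)) * UtProdM q t m K else 0) := by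
    intro K hK
    rw [Fintype.mem_piFinset] at hK
    have := hK (Fin.last t)
    rw [mem_range] at this
    have h5 : e (K (Fin.last t)) = qPoch q (x * q) (K (Fin.last t) - 1) *
      qPoch q (q / x) (K (Fin.last t) - 1) * q ^ (K (Fin.last t)) := by
      simp only [e]; rw [if_pos (by omega)]
    rw [h5]; rfl
  rw [Finset.sum_congr rfl h4, h3, Finset.mul_sum]
  congr 1
  refine Finset.sum_congr rfl fun n _ => ?_
  have h5 : ∑ k ∈ range (L + 1), e k * Bk q k ((n : ℤ) + 1) =
      ∑ k ∈ range (L + 1), qPoch q (x * q) (k - 1) * qPoch q (q / x) (k - 1) * q ^ k *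
      Bk q k ((n : ℤ) + 1) := by
    refine Finset.sum_congr rfl fun k hk => ?_
    rw [mem_range] at hk
    simp only [e]; rw [if_pos (by omega)]
  rw [h5, telescope h hx n (h1 n) (h2 n)]
  unfold Cf ac
  have h6 : q ^ (2 * ((n : ℤ) + 1) ^ 2 - (n + 1)) * q ^ ((t : ℤ) * ((n : ℤ) + 1) ^ 2) * q ^ (n + 1) =
      q ^ (((t : ℤ) + 2) * ((n : ℤ) + 1) ^ 2) := by
    rw [← zpow_natCast, ← zpow_add₀ h.1, ← zpow_add₀ h.1]; congr 1; push_cast; ring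
  have h7 : q ^ (2 * ((n : ℤ) + 1)) = q ^ (2 * (n + 1)) := by
    rw [← zpow_natCast]; congr 1
  rw [h7, ← h6]
  ring


lemma SS_range (M : ℕ) (f : ℤ → ℂ) : SS M f = ∑ i ∈ range (2 * M), f ((i : ℤ) - M) := by
  induction M with
  | zero => simp [SS]
  | succ M ih =>
    have : SS (M + 1) f = SS M f + (f M + f (-1 - M)) := by
      unfold SS; rw [Finset.sum_range_succ]
    rw [this, ih, show 2 * (M + 1) = 2 * M + 1 + 1 by ring, Finset.sum_range_succ,
      Finset.sum_range_succ']
    have e1 : ∀ i ∈ range (2 * M), f (((i + 1 : ℕ) : ℤ) - ((M + 1 : ℕ) : ℤ)) = f ((i : ℤ) - M) := by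
      intro i _; congr 1; push_cast; ring
    rw [Finset.sum_congr rfl e1]
    have e2 : f (((2 * M + 1 : ℕ) : ℤ) - ((M + 1 : ℕ) : ℤ)) = f M := by
      congr 1; push_cast; ring
    have e3 : f (((0 : ℕ) : ℤ) - ((M + 1 : ℕ) : ℤ)) = f (-1 - M) := by
      congr 1; push_cast; ring
    rw [e2, e3]; ring

lemma hecke_abs {α : Type*} (e : (Σ n : ℕ, Fin (2 * (n + 1)) × ℕ) ≃ α) (g : α → ℂ)
    (hg : Summable fun a => ‖g a‖) (c z : ℕ → ℂ) (f : ℤ → ℂ) (hz : ∀ n, ‖z n‖ < 1)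
    (h : ∀ (n : ℕ) (i : Fin (2 * (n + 1))) (u : ℕ),
      g (e ⟨n, (i, u)⟩) = (c n * f (((i : ℕ) : ℤ) - ((n + 1 : ℕ) : ℤ))) * (z n) ^ u) :
    HasSum (fun n => c n * SS (n + 1) f * (1 - z n)⁻¹) (∑' a, g a) := by
  have h1 : HasSum g (∑' a, g a) := hg.of_norm.hasSum
  rw [← e.hasSum_iff] at h1
  refine h1.sigma fun n => ?_
  have h2 : HasSum (fun i : Fin (2 * (n + 1)) => c n * f (((i : ℕ) : ℤ) - ((n + 1 : ℕ) : ℤ)))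
      (c n * SS (n + 1) f) := by
    rw [SS_range, Finset.mul_sum,
      ← Fin.sum_univ_eq_sum_range (fun i => c n * f ((i : ℤ) - ((n + 1 : ℕ) : ℤ)))]
    exact hasSum_fintype _
  have h3 := hasSum_geometric_of_norm_lt_one (hz n)
  have h4 : Summable fun p : Fin (2 * (n + 1)) × ℕ =>
      (c n * f (((p.1 : ℕ) : ℤ) - ((n + 1 : ℕ) : ℤ))) * (z n) ^ p.2 := by
    have := h1.summable.sigma_factor n
    refine this.congr fun p => ?_
    exact h n p.1 p.2
  have h5 := h2.mul h3 h4
  refine h5.congr_fun ?_ |> fun h => h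
  intro p
  exact h n p.1 p.2


abbrev HPos := {p : ℤ × ℤ × ℤ // (0 ≤ p.1 ∧ 0 ≤ p.2.1 ∧ 0 ≤ p.2.2) ∧ p.1 % 2 ≠ p.2.1 % 2}
abbrev HNeg := {p : ℤ × ℤ × ℤ // (p.1 < 0 ∧ p.2.1 < 0 ∧ p.2.2 < 0) ∧ p.1 % 2 ≠ p.2.1 % 2}

def fPos (a : Σ n : ℕ, Fin (2 * (n + 1)) × ℕ) : HPos :=
  ⟨(((a.2.1 : ℕ) : ℤ), 2 * (a.1 : ℤ) + 1 - ((a.2.1 : ℕ) : ℤ), (a.2.2 : ℤ)), by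
    have := a.2.1.2
    refine ⟨⟨?_, ?_, ?_⟩, ?_⟩ <;> dsimp only <;> omega⟩

def fNeg (a : Σ n : ℕ, Fin (2 * (n + 1)) × ℕ) : HNeg :=
  ⟨(((a.2.1 : ℕ) : ℤ) - 2 * ((a.1 : ℤ) + 1), -1 - ((a.2.1 : ℕ) : ℤ), -1 - (a.2.2 : ℤ)), by
    have := a.2.1.2
    refine ⟨⟨?_, ?_, ?_⟩, ?_⟩ <;> dsimp only <;> omega⟩

lemma fPos_bij : Function.Bijective fPos := by
  constructor
  · rintro ⟨n, i, u⟩ ⟨n', i', u'⟩ h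
    have h := congrArg Subtype.val h
    simp only [fPos, Prod.mk.injEq] at h
    obtain ⟨h1, h2, h3⟩ := h
    obtain rfl : n = n' := by omega
    obtain rfl : i = i' := Fin.ext (by omega)
    obtain rfl : u = u' := by omega
    rfl
  · rintro ⟨⟨r, s, u⟩, ⟨h1, h2, h3⟩, h4⟩
    dsimp only at h1 h2 h3 h4
    refine ⟨⟨((r + s) / 2).toNat, ⟨⟨r.toNat, by omega⟩, u.toNat⟩⟩, ?_⟩
    apply Subtype.ext
    simp only [fPos, Prod.mk.injEq]
    omega

lemma fNeg_bij : Function.Bijective fNeg := by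
  constructor
  · rintro ⟨n, i, u⟩ ⟨n', i', u'⟩ h
    have h := congrArg Subtype.val h
    simp only [fNeg, Prod.mk.injEq] at h
    obtain ⟨h1, h2, h3⟩ := h
    obtain rfl : n = n' := by omega
    obtain rfl : i = i' := Fin.ext (by omega)
    obtain rfl : u = u' := by omega
    rfl
  · rintro ⟨⟨r, s, u⟩, ⟨h1, h2, h3⟩, h4⟩
    dsimp only at h1 h2 h3 h4
    refine ⟨⟨((-r - s) / 2 - 1).toNat, ⟨⟨(-1 - s).toNat, by omega⟩, (-1 - u).toNat⟩⟩, ?_⟩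
    apply Subtype.ext
    simp only [fNeg, Prod.mk.injEq]
    omega

lemma summable_three (ρ σ : ℝ) (h0 : 0 ≤ ρ) (h1 : ρ < 1) (h2 : 0 ≤ σ) (h3 : σ < 1) :
    Summable fun p : ℕ × ℕ × ℕ => ρ ^ p.1 * (ρ ^ p.2.1 * σ ^ p.2.2) := by
  have a := summable_geometric_of_lt_one h0 h1
  have b := summable_geometric_of_lt_one h2 h3
  have c : Summable fun p : ℕ × ℕ => ρ ^ p.1 * σ ^ p.2 :=
    a.mul_of_nonneg b (fun n => pow_nonneg h0 n) (fun n => pow_nonneg h2 n)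
  exact a.mul_of_nonneg c (fun n => pow_nonneg h0 n)
    (fun n => mul_nonneg (pow_nonneg h0 _) (pow_nonneg h2 _))

lemma norm_bound_aux {q : ℂ} (hq0 : 0 < ‖q‖) (hq1 : ‖q‖ < 1) (E : ℤ) (a b c : ℕ) (T : ℤ)
    (hE : (a : ℤ) + b + c - T ≤ E) :
    ‖q ^ E‖ ≤ ‖q‖ ^ (-T) * (‖q‖ ^ a * (‖q‖ ^ b * ‖q‖ ^ c)) := by
  rw [norm_zpow]
  have : ‖q‖ ^ (-T) * (‖q‖ ^ a * (‖q‖ ^ b * ‖q‖ ^ c)) = ‖q‖ ^ ((a : ℤ) + b + c - T) := by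
    rw [← zpow_natCast, ← zpow_natCast, ← zpow_natCast, ← zpow_add₀ hq0.ne', ← zpow_add₀ hq0.ne',
      ← zpow_add₀ hq0.ne']
    congr 1; ring
  rw [this]
  exact zpow_le_zpow_right_of_le_one₀ hq0 hq1.le hE

lemma pos_summable {q x : ℂ} (hq0 : 0 < ‖q‖) (hq1 : ‖q‖ < 1) (hx2 : ‖x‖ * ‖q‖ < 1)
    (T M : ℤ) (hM : 1 ≤ M) (hMT : M ≤ T) :
    Summable fun p : HPos => ‖heckeTermM3 q x T M p.1‖ := by
  have h1 := (summable_three ‖q‖ (‖x‖ * ‖q‖) hq0.le hq1 (by positivity) hx2).mul_left (‖q‖ ^ (-(T + M)))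
  have hinj : Function.Injective (fun p : HPos => (p.1.1.toNat, p.1.2.1.toNat, p.1.2.2.toNat)) := by
    rintro ⟨⟨r, s, u⟩, ⟨h1, h2, h3⟩, h4⟩ ⟨⟨r', s', u'⟩, ⟨h1', h2', h3'⟩, h4'⟩ h
    dsimp only at h1 h2 h3 h1' h2' h3'
    simp only [Prod.mk.injEq] at h
    apply Subtype.ext
    simp only [Prod.mk.injEq]
    omega
  refine Summable.of_nonneg_of_le (fun _ => norm_nonneg _) ?_ (h1.comp_injective hinj)
  rintro ⟨⟨r, s, u⟩, ⟨h1, h2, h3⟩, h4⟩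
  dsimp only at h1 h2 h3 h4
  obtain ⟨a, rfl⟩ := Int.eq_ofNat_of_zero_le h1
  obtain ⟨b, rfl⟩ := Int.eq_ofNat_of_zero_le h2
  obtain ⟨c, rfl⟩ := Int.eq_ofNat_of_zero_le h3
  have hab : (1 : ℤ) ≤ a + b := by omega
  simp only [heckeTermM3, Function.comp, Int.toNat_natCast]
  rw [norm_mul, norm_mul, norm_zpow, norm_neg, norm_one, one_zpow, one_mul, zpow_natCast, norm_pow]
  have key := norm_bound_aux hq0 hq1 (((a : ℤ) ^ 2 + (b : ℤ) ^ 2 + 2 * (4 * T + 3) * a * b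
          + 4 * (1 + M + T) * a + 4 * (1 - M + T) * b - 4 * T - 4 * M + 3
          + 4 * c * (a + b + 1)) / 8) a b c (T + M) (by
    rw [Int.le_ediv_iff_mul_le (by norm_num)]
    have t1 : (0 : ℤ) ≤ (T - M) * b := mul_nonneg (by omega) (by omega)
    have t2 : (0 : ℤ) ≤ (T + M - 2) * a := mul_nonneg (by omega) (by omega)
    have t3 : (0 : ℤ) ≤ (4 * T + 3) * (a * b) := mul_nonneg (by omega) (by positivity)
    have t4 : (0 : ℤ) ≤ c * (a + b - 1) := mul_nonneg (by omega) (by omega)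
    nlinarith [sq_nonneg ((b : ℤ) - 2), sq_nonneg (a : ℤ)])
  calc _ ≤ ‖x‖ ^ c * (‖q‖ ^ (-(T + M)) * (‖q‖ ^ a * (‖q‖ ^ b * ‖q‖ ^ c))) :=
        mul_le_mul_of_nonneg_left key (by positivity)
    _ = _ := by rw [mul_pow]; ring

lemma neg_summable {q x : ℂ} (hq0 : 0 < ‖q‖) (hq1 : ‖q‖ < 1) (hx1 : ‖q‖ < ‖x‖)
    (T M : ℤ) (hM : 1 ≤ M) (hMT : M ≤ T) :
    Summable fun p : HNeg => ‖heckeTermM3 q x T M p.1‖ := by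
  have hx0 : 0 < ‖x‖ := hq0.trans hx1
  have h1 := (summable_three ‖q‖ (‖q‖ / ‖x‖) hq0.le hq1 (by positivity)
    ((div_lt_one hx0).mpr hx1)).mul_left (‖q‖ ^ (-(T + M)) * (‖q‖ / ‖x‖))
  have hinj : Function.Injective (fun p : HNeg =>
      ((-1 - p.1.1).toNat, (-1 - p.1.2.1).toNat, (-1 - p.1.2.2).toNat)) := by
    rintro ⟨⟨r, s, u⟩, ⟨h1, h2, h3⟩, h4⟩ ⟨⟨r', s', u'⟩, ⟨h1', h2', h3'⟩, h4'⟩ h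
    dsimp only at h1 h2 h3 h1' h2' h3'
    simp only [Prod.mk.injEq] at h
    apply Subtype.ext
    simp only [Prod.mk.injEq]
    omega
  refine Summable.of_nonneg_of_le (fun _ => norm_nonneg _) ?_ (h1.comp_injective hinj)
  rintro ⟨⟨r, s, u⟩, ⟨h1, h2, h3⟩, h4⟩
  dsimp only at h1 h2 h3 h4
  obtain ⟨a, rfl⟩ : ∃ a : ℕ, r = -1 - a := ⟨(-1 - r).toNat, by omega⟩
  obtain ⟨b, rfl⟩ : ∃ a : ℕ, s = -1 - a := ⟨(-1 - s).toNat, by omega⟩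
  obtain ⟨c, rfl⟩ : ∃ a : ℕ, u = -1 - a := ⟨(-1 - u).toNat, by omega⟩
  have hab : (1 : ℤ) ≤ a + b := by omega
  simp only [heckeTermM3, Function.comp, sub_sub_cancel, Int.toNat_natCast]
  rw [norm_mul, norm_mul, norm_zpow, norm_neg, norm_one, one_zpow, one_mul,
    show (-1 - (c : ℤ)) = -((c + 1 : ℕ) : ℤ) by push_cast; ring, zpow_neg, zpow_natCast, norm_inv,
    norm_pow]
  have key := norm_bound_aux hq0 hq1 (((-1 - (a : ℤ)) ^ 2 + (-1 - (b : ℤ)) ^ 2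
          + 2 * (4 * T + 3) * (-1 - (a : ℤ)) * (-1 - (b : ℤ))
          + 4 * (1 + M + T) * (-1 - (a : ℤ)) + 4 * (1 - M + T) * (-1 - (b : ℤ)) - 4 * T - 4 * M + 3
          + 4 * (-((c + 1 : ℕ) : ℤ)) * ((-1 - (a : ℤ)) + (-1 - (b : ℤ)) + 1)) / 8)
          a b (c + 1) (T + M) (by
    rw [Int.le_ediv_iff_mul_le (by norm_num)]
    push_cast
    have t1 : (0 : ℤ) ≤ (T - M) * a := mul_nonneg (by omega) (by omega)
    have t2 : (0 : ℤ) ≤ (T + M - 2) * b := mul_nonneg (by omega) (by omega)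
    have t3 : (0 : ℤ) ≤ (4 * T + 3) * (a * b) := mul_nonneg (by omega) (by positivity)
    have t4 : (0 : ℤ) ≤ (c + 1) * (a + b - 1) := mul_nonneg (by omega) (by omega)
    nlinarith [sq_nonneg ((a : ℤ) - 2), sq_nonneg (b : ℤ)])
  calc _ ≤ (‖x‖ ^ (c + 1))⁻¹ * (‖q‖ ^ (-(T + M)) * (‖q‖ ^ a * (‖q‖ ^ b * ‖q‖ ^ (c + 1)))) :=
        mul_le_mul_of_nonneg_left key (by positivity)
    _ = _ := by rw [div_pow]; field_simp; ring

lemma pos_hasSum {q x : ℂ} (hq0 : 0 < ‖q‖) (hq1 : ‖q‖ < 1) (hx2 : ‖x‖ * ‖q‖ < 1)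
    (t m : ℕ) (hmt : m ≤ t) :
    HasSum (fun n : ℕ => q ^ (((t : ℤ) + 2) * ((n : ℤ) + 1) ^ 2 - (t + 1)) *
      SS (n + 1) (th q t m) * (1 - x * q ^ (n + 1))⁻¹)
      (∑' p : HPos, heckeTermM3 q x ((t : ℤ) + 1) ((m : ℤ) + 1) p.1) := by
  have hq : q ≠ 0 := norm_pos_iff.mp hq0
  refine hecke_abs (Equiv.ofBijective fPos fPos_bij) (fun p : HPos => heckeTermM3 q x ((t : ℤ) + 1) ((m : ℤ) + 1) p.1)
    (pos_summable hq0 hq1 hx2 _ _ (by omega) (by omega))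
    (fun n => q ^ (((t : ℤ) + 2) * ((n : ℤ) + 1) ^ 2 - (t + 1)))
    (fun n => x * q ^ (n + 1)) (th q t m) ?_ ?_
  · intro n
    rw [norm_mul, norm_pow, pow_succ, ← mul_assoc]
    have : ‖q‖ ^ n ≤ 1 := pow_le_one₀ hq0.le hq1.le
    calc _ = ‖q‖ ^ n * (‖x‖ * ‖q‖) := by ring
      _ ≤ 1 * (‖x‖ * ‖q‖) := by gcongr
      _ < 1 := by simpa using hx2
  · intro n i u
    simp only [Equiv.ofBijective_apply, fPos, heckeTermM3, th]
    obtain ⟨j, hj⟩ : ∃ j : ℤ, ((i : ℕ) : ℤ) = j + (n + 1) := ⟨(i : ℕ) - (n + 1), by ring⟩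
    rw [hj]
    have e1 : (j + ((n : ℤ) + 1) - (2 * (n : ℤ) + 1 - (j + (n + 1))) - 1) / 2 = j := by
      rw [show j + ((n : ℤ) + 1) - (2 * (n : ℤ) + 1 - (j + (n + 1))) - 1 = 2 * j by ring]
      omega
    have e2 : ∀ s : ℤ, s = 8 * ((((t : ℤ) + 2) * ((n : ℤ) + 1) ^ 2 - (t + 1)) +
        (-(2 * (t : ℤ) + 3) * tri j + (m + 1) * j) + ((n + 1 : ℕ) : ℤ) * (u : ℤ)) →
        q ^ (s / 8) = q ^ (((t : ℤ) + 2) * ((n : ℤ) + 1) ^ 2 - (t + 1)) *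
          q ^ (-(2 * (t : ℤ) + 3) * tri j + (m + 1) * j) * (q ^ (n + 1)) ^ u := by
      intro s hs
      rw [hs, Int.mul_ediv_cancel_left _ (by norm_num), zpow_add₀ hq, zpow_add₀ hq, zpow_mul q,
        zpow_natCast, zpow_natCast]
    have e3 : j + ((n : ℤ) + 1) - ((n + 1 : ℕ) : ℤ) = j := by push_cast; ring
    rw [e1, e2, e3, zpow_natCast, mul_pow]
    · ring
    · push_cast
      linear_combination (-4 * (2 * (t : ℤ) + 3)) * (-(tri_two j))

lemma neg_hasSum {q x : ℂ} (hq0 : 0 < ‖q‖) (hq1 : ‖q‖ < 1) (hx1 : ‖q‖ < ‖x‖)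
    (t m : ℕ) (hmt : m ≤ t) :
    HasSum (fun n : ℕ => q ^ (((t : ℤ) + 2) * ((n : ℤ) + 1) ^ 2 - (t + 1)) * (q ^ (n + 1) / x) *
      SS (n + 1) (th q t m) * (1 - q ^ (n + 1) / x)⁻¹)
      (∑' p : HNeg, heckeTermM3 q x ((t : ℤ) + 1) ((m : ℤ) + 1) p.1) := by
  have hq : q ≠ 0 := norm_pos_iff.mp hq0
  have hx0 : 0 < ‖x‖ := hq0.trans hx1
  refine hecke_abs (Equiv.ofBijective fNeg fNeg_bij) (fun p : HNeg => heckeTermM3 q x ((t : ℤ) + 1) ((m : ℤ) + 1) p.1)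
    (neg_summable hq0 hq1 hx1 _ _ (by omega) (by omega))
    (fun n => q ^ (((t : ℤ) + 2) * ((n : ℤ) + 1) ^ 2 - (t + 1)) * (q ^ (n + 1) / x))
    (fun n => q ^ (n + 1) / x) (th q t m) ?_ ?_
  · intro n
    rw [norm_div, norm_pow, div_lt_one hx0, pow_succ]
    have : ‖q‖ ^ n ≤ 1 := pow_le_one₀ hq0.le hq1.le
    calc _ ≤ 1 * ‖q‖ := by gcongr
      _ < _ := by simpa using hx1
  · intro n i u
    simp only [Equiv.ofBijective_apply, fNeg, heckeTermM3, th]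
    obtain ⟨j, hj⟩ : ∃ j : ℤ, ((i : ℕ) : ℤ) = j + (n + 1) := ⟨(i : ℕ) - (n + 1), by ring⟩
    rw [hj]
    have e1 : (j + ((n : ℤ) + 1) - 2 * ((n : ℤ) + 1) - (-1 - (j + ((n : ℤ) + 1))) - 1) / 2 = j := by
      rw [show j + ((n : ℤ) + 1) - 2 * ((n : ℤ) + 1) - (-1 - (j + ((n : ℤ) + 1))) - 1 = 2 * j by ring]
      omega
    have e2 : ∀ s : ℤ, s = 8 * ((((t : ℤ) + 2) * ((n : ℤ) + 1) ^ 2 - (t + 1)) +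
        (-(2 * (t : ℤ) + 3) * tri j + (m + 1) * j) + ((n + 1 : ℕ) : ℤ) * ((u + 1 : ℕ) : ℤ)) →
        q ^ (s / 8) = q ^ (((t : ℤ) + 2) * ((n : ℤ) + 1) ^ 2 - (t + 1)) *
          q ^ (-(2 * (t : ℤ) + 3) * tri j + (m + 1) * j) * (q ^ (n + 1)) ^ (u + 1) := by
      intro s hs
      rw [hs, Int.mul_ediv_cancel_left _ (by norm_num), zpow_add₀ hq, zpow_add₀ hq, zpow_mul q,
        zpow_natCast, zpow_natCast]
    have e3 : j + ((n : ℤ) + 1) - ((n + 1 : ℕ) : ℤ) = j := by push_cast; ring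
    rw [e1, e2, e3, show -1 - (u : ℤ) = -((u + 1 : ℕ) : ℤ) by push_cast; ring, zpow_neg,
      zpow_natCast, div_pow]
    · rw [pow_succ (q ^ (n + 1)) u, pow_succ x u, mul_inv]; ring
    · push_cast
      linear_combination (-4 * (2 * (t : ℤ) + 3)) * (-(tri_two j))


lemma NR_of_norm {q : ℂ} (hq0 : 0 < ‖q‖) (hq1 : ‖q‖ < 1) : NR q := by
  refine ⟨norm_pos_iff.mp hq0, fun n hn h => ?_⟩
  have : ‖q ^ n‖ < 1 := by rw [norm_pow]; exact pow_lt_one₀ hq0.le hq1 (by omega)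
  rw [h, norm_one] at this
  exact lt_irrefl _ this

lemma summable_aqj {q : ℂ} (hq1 : ‖q‖ < 1) (a : ℂ) : Summable fun j : ℕ => ‖-(a * q ^ j)‖ := by
  simp only [norm_neg, norm_mul, norm_pow]
  exact (summable_geometric_of_lt_one (norm_nonneg _) hq1).mul_left _

lemma qPoch_tendsto {q : ℂ} (hq1 : ‖q‖ < 1) (a : ℂ) :
    Filter.Tendsto (fun n => qPoch q a n) Filter.atTop (nhds (qPochInf q a)) := by
  have h := multipliable_one_add_of_summable (summable_aqj hq1 a)
  have h2 := h.hasProd.tendsto_prod_nat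
  simpa only [qPoch, qPochInf, sub_eq_add_neg] using h2

lemma qPochInf_ne {q : ℂ} (hq0 : 0 < ‖q‖) (hq1 : ‖q‖ < 1) : qPochInf q q ≠ 0 := by
  have h := tprod_one_add_ne_zero_of_summable (f := fun j : ℕ => -(q * q ^ j)) ?_ (summable_aqj hq1 q)
  · simpa only [qPochInf, sub_eq_add_neg] using h
  · intro i h0
    apply (NR_of_norm hq0 hq1).2 (i + 1) (by omega)
    rw [pow_succ']; linear_combination -h0

lemma iq_qPoch (q : ℂ) (n : ℕ) : iq q (n : ℤ) = (qPoch q q n)⁻¹ := by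
  rw [iq_nat]; unfold qPoch
  congr 1; exact Finset.prod_congr rfl fun j _ => by ring

lemma iq_tendsto {q : ℂ} (hq0 : 0 < ‖q‖) (hq1 : ‖q‖ < 1) :
    Filter.Tendsto (fun n : ℕ => iq q (n : ℤ)) Filter.atTop (nhds (qPochInf q q)⁻¹) := by
  simp only [iq_qPoch]
  exact (qPoch_tendsto hq1 q).inv₀ (qPochInf_ne hq0 hq1)

lemma bdd_of_tendsto {f : ℕ → ℂ} {l : ℂ} (h : Filter.Tendsto f Filter.atTop (nhds l)) :
    ∃ C : ℝ, 0 < C ∧ ∀ n, ‖f n‖ ≤ C := by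
  obtain ⟨C, hC⟩ := h.norm.bddAbove_range
  refine ⟨max C 1, by positivity, fun n => le_max_of_le_left (hC ⟨n, rfl⟩)⟩

lemma iq_bdd {q : ℂ} (hq0 : 0 < ‖q‖) (hq1 : ‖q‖ < 1) :
    ∃ C : ℝ, 0 < C ∧ ∀ n : ℤ, ‖iq q n‖ ≤ C := by
  obtain ⟨C, hC, h⟩ := bdd_of_tendsto (iq_tendsto hq0 hq1)
  refine ⟨C, hC, fun n => ?_⟩
  rcases lt_or_ge n 0 with hn | hn
  · rw [iq_neg q hn, norm_zero]; exact hC.le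
  · obtain ⟨k, rfl⟩ := Int.eq_ofNat_of_zero_le hn
    exact h k

lemma qBinom_bdd {q : ℂ} (hq0 : 0 < ‖q‖) (hq1 : ‖q‖ < 1) :
    ∃ C : ℝ, 0 < C ∧ ∀ n k : ℤ, ‖qBinom q n k‖ ≤ C := by
  obtain ⟨C, hC, h⟩ := iq_bdd hq0 hq1
  have hs := summable_geometric_of_lt_one hq0.le hq1
  set E := Real.exp (∑' j : ℕ, ‖q‖ ^ j) with hE
  have hE0 : 0 < E := Real.exp_pos _
  refine ⟨E * C, by positivity, fun n k => ?_⟩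
  by_cases hk : 0 ≤ k ∧ k ≤ n
  · obtain ⟨l, rfl⟩ := Int.eq_ofNat_of_zero_le hk.1
    obtain ⟨B, hB⟩ := Int.eq_ofNat_of_zero_le (sub_nonneg.mpr hk.2)
    rw [show n = (l : ℤ) + (B : ℕ) by rw [← hB]; ring,
      qBinom_nat q (B : ℕ) (by omega) l (norm_pos_iff.mp hq0), norm_mul]
    refine mul_le_mul ?_ (h _) (norm_nonneg _) hE0.le
    rw [norm_prod]
    calc ∏ j ∈ range l, ‖1 - q ^ ((B : ℕ) : ℤ) * q ^ (j + 1)‖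
        ≤ ∏ j ∈ range l, (1 + ‖q‖ ^ j) := by
          refine Finset.prod_le_prod (fun _ _ => norm_nonneg _) fun j _ => ?_
          refine (norm_sub_le _ _).trans ?_
          rw [norm_one, zpow_natCast, ← pow_add, norm_pow]
          gcongr 1 + ?_
          exact pow_le_pow_of_le_one hq0.le hq1.le (by omega)
      _ ≤ Real.exp (∑ j ∈ range l, ‖q‖ ^ j) :=
          Real.prod_one_add_le_exp_sum _ (fun j => pow_nonneg hq0.le j)
      _ ≤ E := Real.exp_le_exp.mpr (hs.sum_le_tsum _ fun j _ => pow_nonneg hq0.le j)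
  · unfold qBinom; rw [if_neg hk, norm_zero]; positivity

lemma summable_pi_geom (ρ : ℝ) (h0 : 0 ≤ ρ) (h1 : ρ < 1) (n : ℕ) :
    Summable fun K : Fin n → ℕ => ∏ i, ρ ^ K i := by
  induction n with
  | zero => exact (hasSum_fintype _).summable
  | succ n ih =>
    rw [← (Fin.consEquiv (fun _ : Fin (n + 1) => ℕ)).summable_iff]
    have := (summable_geometric_of_lt_one h0 h1).mul_of_nonneg ih (fun n => pow_nonneg h0 n)
      (fun K => Finset.prod_nonneg fun i _ => pow_nonneg h0 _)
    refine this.congr fun p => ?_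
    simp [Fin.prod_univ_succ, Fin.consEquiv]

lemma Ut_summable {q : ℂ} (hq0 : 0 < ‖q‖) (hq1 : ‖q‖ < 1) (x : ℂ) (t m : ℕ) :
    Summable fun K : Fin (t + 1) → ℕ => ‖UtTermM q x t m K‖ := by
  obtain ⟨C1, hC1, h1⟩ := bdd_of_tendsto (qPoch_tendsto hq1 (x * q))
  obtain ⟨C2, hC2, h2⟩ := bdd_of_tendsto (qPoch_tendsto hq1 (q / x))
  obtain ⟨C3, hC3, h3⟩ := qBinom_bdd hq0 hq1
  refine Summable.of_nonneg_of_le (fun _ => norm_nonneg _) (fun K => ?_)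
    ((summable_pi_geom ‖q‖ hq0.le hq1 (t + 1)).mul_left (C1 * C2 * C3 ^ t))
  unfold UtTermM UtProdM
  rw [norm_mul, norm_mul, norm_mul, norm_prod, Fin.prod_univ_castSucc, norm_pow]
  have h4 : ∏ i : Fin t, ‖q ^ (K i.castSucc ^ 2) *
    qBinom q ((K i.succ : ℤ) - (K i.castSucc : ℤ) - ((i : ℕ) + 1)
        + ∑ j ∈ Finset.univ.filter (fun j : Fin (t+1) => (j : ℕ) ≤ (i : ℕ)),
            (2 * (K j : ℤ) + if (j : ℕ) < m then 1 else 0))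
      ((K i.succ : ℤ) - (K i.castSucc : ℤ))‖ ≤ ∏ i : Fin t, (‖q‖ ^ K i.castSucc * C3) := by
    refine Finset.prod_le_prod (fun _ _ => norm_nonneg _) fun i _ => ?_
    rw [norm_mul, norm_pow]
    refine mul_le_mul ?_ (h3 _ _) (norm_nonneg _) (by positivity)
    exact pow_le_pow_of_le_one hq0.le hq1.le (Nat.le_self_pow (by norm_num) _)
  rw [Finset.prod_mul_distrib, Finset.prod_const, Finset.card_univ, Fintype.card_fin] at h4
  calc _ ≤ C1 * C2 * ‖q‖ ^ K (Fin.last t) * ((∏ i : Fin t, ‖q‖ ^ K i.castSucc) * C3 ^ t) := by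
        gcongr
        · exact h1 _
        · exact h2 _
    _ = _ := by ring

lemma Ut_indicator (q x : ℂ) (t m : ℕ) (hmt : m ≤ t) (K : Fin (t + 1) → ℕ) :
    Set.indicator {k : Fin (t+1) → ℕ |
        (∀ i : Fin t, k i.castSucc ≤ k i.succ) ∧ 1 ≤ k ⟨m, Nat.lt_succ_of_le hmt⟩}
      (fun K => UtTermM q x t m K) K = if 1 ≤ K ⟨m, Nat.lt_succ_of_le hmt⟩ then UtTermM q x t m K else 0 := by
  rw [Set.indicator_apply]
  simp only [Set.mem_setOf_eq]
  by_cases h1 : ∀ i : Fin t, K i.castSucc ≤ K i.succ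
  · simp only [h1, implies_true, true_and]
  · rw [if_neg (fun h => h1 h.1)]
    push Not at h1
    obtain ⟨i, hi⟩ := h1
    have : UtTermM q x t m K = 0 := by
      unfold UtTermM UtProdM
      rw [Finset.prod_eq_zero (Finset.mem_univ i), mul_zero]
      rw [qBinom_neg q _ _ (by omega), mul_zero]
    rw [this]; simp

lemma Ut_box_tendsto {q : ℂ} (hq0 : 0 < ‖q‖) (hq1 : ‖q‖ < 1) (x : ℂ) (t m : ℕ) (hmt : m ≤ t) :
    Filter.Tendsto (fun L : ℕ => ∑ K ∈ Fintype.piFinset (fun _ : Fin (t + 1) => range (L + 1)),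
      (if 1 ≤ K ⟨m, Nat.lt_succ_of_le hmt⟩ then UtTermM q x t m K else 0)) Filter.atTop
      (nhds (∑' k : {k : Fin (t+1) → ℕ //
          (∀ i : Fin t, k i.castSucc ≤ k i.succ) ∧ 1 ≤ k ⟨m, Nat.lt_succ_of_le hmt⟩},
        UtTermM q x t m k.1)) := by
  have h1 := tsum_subtype {k : Fin (t+1) → ℕ |
        (∀ i : Fin t, k i.castSucc ≤ k i.succ) ∧ 1 ≤ k ⟨m, Nat.lt_succ_of_le hmt⟩} (fun K => UtTermM q x t m K)
  have h2 := ((Ut_summable hq0 hq1 x t m).of_norm.indicator {k : Fin (t+1) → ℕ |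
        (∀ i : Fin t, k i.castSucc ≤ k i.succ) ∧ 1 ≤ k ⟨m, Nat.lt_succ_of_le hmt⟩}).hasSum
  rw [← h1] at h2
  have h3 : Filter.Tendsto (fun L : ℕ => Fintype.piFinset (fun _ : Fin (t + 1) => range (L + 1)))
      Filter.atTop Filter.atTop := by
    apply Filter.tendsto_atTop_finset_of_monotone
    · intro a b hab
      exact Fintype.piFinset_subset _ _ fun _ => Finset.range_mono (by omega)
    · intro K
      refine ⟨∑ i, K i, ?_⟩
      rw [Fintype.mem_piFinset]
      intro i
      rw [mem_range, Nat.lt_succ_iff]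
      exact Finset.single_le_sum (fun _ _ => Nat.zero_le _) (Finset.mem_univ i)
  have h4 := Filter.Tendsto.comp h2 h3
  refine h4.congr fun L => ?_
  simp only [Function.comp]
  exact Finset.sum_congr rfl fun K _ => Ut_indicator q x t m hmt K

lemma xq_ne {q x : ℂ} (hq0 : 0 < ‖q‖) (hq1 : ‖q‖ < 1) (hx2 : ‖x‖ * ‖q‖ < 1) (n : ℕ) :
    1 - x * q ^ (n + 1) ≠ 0 := by
  intro h
  have : ‖x * q ^ (n + 1)‖ < 1 := by
    rw [norm_mul, norm_pow, pow_succ]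
    have : ‖q‖ ^ n ≤ 1 := pow_le_one₀ hq0.le hq1.le
    calc _ = ‖q‖ ^ n * (‖x‖ * ‖q‖) := by ring
      _ ≤ 1 * (‖x‖ * ‖q‖) := by gcongr
      _ < 1 := by simpa using hx2
  rw [show x * q ^ (n + 1) = 1 by linear_combination -h, norm_one] at this
  exact lt_irrefl _ this

lemma ac_hasSum {q x : ℂ} (hq0 : 0 < ‖q‖) (hq1 : ‖q‖ < 1) (hx1 : ‖q‖ < ‖x‖) (hx2 : ‖x‖ * ‖q‖ < 1)
    (t m : ℕ) (hmt : m ≤ t) :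
    HasSum (fun n => q ^ (-(t : ℤ) - 1) * ac q x t m n)
      ((∑' p : HPos, heckeTermM3 q x ((t : ℤ) + 1) ((m : ℤ) + 1) p.1) +
      (∑' p : HNeg, heckeTermM3 q x ((t : ℤ) + 1) ((m : ℤ) + 1) p.1)) := by
  have hx0 : 0 < ‖x‖ := hq0.trans hx1
  have hq := norm_pos_iff.mp hq0
  have hx := norm_pos_iff.mp hx0
  have h := (pos_hasSum hq0 hq1 hx2 t m hmt).add (neg_hasSum hq0 hq1 hx1 t m hmt)
  have hx3 : ‖x⁻¹‖ * ‖q‖ < 1 := by rw [norm_inv, inv_mul_lt_one₀ hx0]; exact hx1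
  convert h using 1
  funext n
  unfold ac
  have e1 := xq_ne hq0 hq1 hx2 n
  have e2 := xq_ne hq0 hq1 hx3 n
  rw [show x⁻¹ * q ^ (n + 1) = q ^ (n + 1) / x by ring] at e2
  have e3 : q ^ (((t : ℤ) + 2) * ((n : ℤ) + 1) ^ 2 - (t + 1)) =
      q ^ (-(t : ℤ) - 1) * q ^ (((t : ℤ) + 2) * ((n : ℤ) + 1) ^ 2) := by
    rw [← zpow_add₀ hq]; congr 1; ring
  have e4 : (1 - q ^ (2 * (n + 1))) / ((1 - x * q ^ (n + 1)) * (1 - q ^ (n + 1) / x)) =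
      (1 - x * q ^ (n + 1))⁻¹ + q ^ (n + 1) / x * (1 - q ^ (n + 1) / x)⁻¹ := by
    rw [div_eq_iff (mul_ne_zero e1 e2), mul_comm 2 (n + 1), pow_mul]
    have hxx : x * x⁻¹ = 1 := mul_inv_cancel₀ hx
    have i1 := inv_mul_cancel₀ e1
    have i2 := inv_mul_cancel₀ e2
    rw [add_mul]
    rw [← mul_assoc, i1, one_mul, mul_assoc, mul_comm (1 - x * q ^ (n + 1)), ← mul_assoc (_⁻¹), i2]
    field_simp
    ring
  rw [e3, e4]; ring

lemma rhs_tendsto {q x : ℂ} (hq0 : 0 < ‖q‖) (hq1 : ‖q‖ < 1) (t m : ℕ)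
    (hs : Summable (ac q x t m)) :
    Filter.Tendsto (fun L : ℕ => ∑ n ∈ range L, ac q x t m n * Bk q L ((n : ℤ) + 1)) Filter.atTop
      (nhds ((∑' n, ac q x t m n) * ((qPochInf q q)⁻¹ * (qPochInf q q)⁻¹))) := by
  obtain ⟨C, hC, h⟩ := iq_bdd hq0 hq1
  rw [← tsum_mul_right]
  have h1 := tendsto_tsum_of_dominated_convergence (𝓕 := Filter.atTop)
    (f := fun (L : ℕ) (n : ℕ) => ac q x t m n * Bk q L ((n : ℤ) + 1))
    (g := fun n => ac q x t m n * ((qPochInf q q)⁻¹ * (qPochInf q q)⁻¹))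
    (bound := fun n => ‖ac q x t m n‖ * (C * C)) (hs.norm.mul_right _) ?_ ?_
  · refine h1.congr fun L => ?_
    rw [tsum_eq_sum (s := range L)]
    intro n hn
    rw [mem_range] at hn
    unfold Bk
    rw [iq_neg q (by omega)]; simp
  · intro n
    refine Filter.Tendsto.const_mul _ ?_
    unfold Bk
    have hi := iq_tendsto hq0 hq1
    refine Filter.Tendsto.mul ?_ ?_
    · have := hi.comp (Filter.tendsto_sub_atTop_nat (n + 1))
      refine this.congr' ?_
      filter_upwards [Filter.eventually_ge_atTop (n + 1)] with L hL
      simp only [Function.comp]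
      congr 1; omega
    · have := hi.comp (Filter.tendsto_add_atTop_nat (n + 1))
      refine this.congr fun L => ?_
      simp only [Function.comp]
      congr 1
  · refine Filter.Eventually.of_forall fun L n => ?_
    rw [norm_mul]
    refine mul_le_mul_of_nonneg_left ?_ (norm_nonneg _)
    unfold Bk
    rw [norm_mul]
    exact mul_le_mul (h _) (h _) (norm_nonneg _) hC.le

/-- Hecke-type triple-sum expansion of `U_t^{(m)}(-x;q)` (the paper's
`t, m` are `t+1, m+1` here), valid for `|q| < |x| < |q|⁻¹`, with absolute convergence
of each series. -/
theorem stmt16 (t m : ℕ) (hmt : m ≤ t) (q x : ℂ)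
    (hq0 : 0 < ‖q‖) (hq1 : ‖q‖ < 1)
    (hx1 : ‖q‖ < ‖x‖) (hx2 : ‖x‖ < (‖q‖)⁻¹) :
    Summable (fun k : {k : Fin (t+1) → ℕ //
        (∀ i : Fin t, k i.castSucc ≤ k i.succ) ∧ 1 ≤ k ⟨m, by omega⟩} =>
      ‖UtTermM q x t m k.1‖) ∧
    Summable (fun p : {p : ℤ × ℤ × ℤ // (0 ≤ p.1 ∧ 0 ≤ p.2.1 ∧ 0 ≤ p.2.2) ∧
        p.1 % 2 ≠ p.2.1 % 2} =>
      ‖heckeTermM3 q x ((t : ℤ) + 1) ((m : ℤ) + 1) p.1‖) ∧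
    Summable (fun p : {p : ℤ × ℤ × ℤ // (p.1 < 0 ∧ p.2.1 < 0 ∧ p.2.2 < 0) ∧
        p.1 % 2 ≠ p.2.1 % 2} =>
      ‖heckeTermM3 q x ((t : ℤ) + 1) ((m : ℤ) + 1) p.1‖) ∧
    q ^ (-(t : ℤ) - 1) *
      ∑' k : {k : Fin (t+1) → ℕ //
          (∀ i : Fin t, k i.castSucc ≤ k i.succ) ∧ 1 ≤ k ⟨m, by omega⟩},
        UtTermM q x t m k.1 =
    -(qPochInf q (x * q) * qPochInf q (q / x) / (qPochInf q q) ^ 2) *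
      ((∑' p : {p : ℤ × ℤ × ℤ // (0 ≤ p.1 ∧ 0 ≤ p.2.1 ∧ 0 ≤ p.2.2) ∧
            p.1 % 2 ≠ p.2.1 % 2},
          heckeTermM3 q x ((t : ℤ) + 1) ((m : ℤ) + 1) p.1) +
       (∑' p : {p : ℤ × ℤ × ℤ // (p.1 < 0 ∧ p.2.1 < 0 ∧ p.2.2 < 0) ∧
            p.1 % 2 ≠ p.2.1 % 2},
          heckeTermM3 q x ((t : ℤ) + 1) ((m : ℤ) + 1) p.1)) := by
  have hx0 : 0 < ‖x‖ := hq0.trans hx1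
  have hq := norm_pos_iff.mp hq0
  have hx := norm_pos_iff.mp hx0
  have hxq : ‖x‖ * ‖q‖ < 1 := by
    rwa [lt_inv_comm₀ hx0 hq0, ← one_div, lt_div_iff₀ hx0, mul_comm] at hx2
  have hx3 : ‖x⁻¹‖ * ‖q‖ < 1 := by rw [norm_inv, inv_mul_lt_one₀ hx0]; exact hx1
  refine ⟨(Ut_summable hq0 hq1 x t m).subtype _,
    pos_summable hq0 hq1 hxq _ _ (by omega) (by omega),
    neg_summable hq0 hq1 hx1 _ _ (by omega) (by omega), ?_⟩
  have hz : q ^ (-(t : ℤ) - 1) ≠ 0 := zpow_ne_zero _ hq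
  have h1 := ac_hasSum hq0 hq1 hx1 hxq t m hmt
  have hs : Summable (ac q x t m) := (summable_mul_left_iff hz).mp h1.summable
  have h2 := h1.tsum_eq
  rw [tsum_mul_left] at h2
  have h3 := Ut_box_tendsto hq0 hq1 x t m hmt
  have h4 := (((qPoch_tendsto hq1 (x * q)).mul (qPoch_tendsto hq1 (q / x))).mul
    (rhs_tendsto hq0 hq1 t m hs)).neg
  have h5 := tendsto_nhds_unique h3 (h4.congr fun L =>
    (box_final (NR_of_norm hq0 hq1) hx (xq_ne hq0 hq1 hxq)
      (fun n => by
        have := xq_ne hq0 hq1 hx3 n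
        rwa [show x⁻¹ * q ^ (n + 1) = q ^ (n + 1) / x by ring] at this) L t m hmt).symm)
  rw [h5, ← h2]
  have := qPochInf_ne hq0 hq1
  field_simp
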